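/- arXiv:2105.08320 — 3 statements merged into one kernel-verified Lean document; each statement's English description precedes it below -/
import Mathlib

section
/- Two copies of the identity channel on a d-dimensional quantum system are S₀-compatible if and only if S₀ is broadcastable; in particular, if S₀ contains two noncommuting states, the pair (id, id) is S₀-incompatible, so χ_incomp(id, id) = 2, while for S₀ consisting of d mutually orthogonal pure states the pair is S₀-compatible, giving χ_comp(id, id) = d. -/
open Matrix ComplexOrder

noncomputable section

def IsState {n : Type*} [Fintype n] [DecidableEq n] (ρ : Matrix n n ℂ) : Prop :=
  ρ.PosSemidef ∧ ρ.trace = 1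

/-- Partial trace over the second factor. -/
def ptr2 {d : ℕ} (M : Matrix (Fin d × Fin d) (Fin d × Fin d) ℂ) :
    Matrix (Fin d) (Fin d) ℂ :=
  Matrix.of fun i j => ∑ k, M (i, k) (j, k)

/-- Partial trace over the first factor. -/
def ptr1 {d : ℕ} (M : Matrix (Fin d × Fin d) (Fin d × Fin d) ℂ) :
    Matrix (Fin d) (Fin d) ℂ :=
  Matrix.of fun i j => ∑ k, M (k, i) (k, j)

/-- `S₀` is broadcastable: there is a channel `B : S(H) → S(H⊗H)` (given by Kraus
operators) whose both marginals equal `ρ` for every `ρ ∈ S₀`. -/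
def Broadcastable {d : ℕ} (S₀ : Set (Matrix (Fin d) (Fin d) ℂ)) : Prop :=
  ∃ (r : ℕ) (K : Fin r → Matrix (Fin d × Fin d) (Fin d) ℂ),
    (∑ i, (K i)ᴴ * K i = 1) ∧
    ∀ ρ ∈ S₀, ptr2 (∑ i, K i * ρ * (K i)ᴴ) = ρ ∧ ptr1 (∑ i, K i * ρ * (K i)ᴴ) = ρ

/-- `S₀`-compatibility of two copies of the identity channel: a joint channel (given by
Kraus operators) whose two partial-trace marginals agree with the identity on `S₀`. -/
def IdPairSCompat {d : ℕ} (S₀ : Set (Matrix (Fin d) (Fin d) ℂ)) : Prop :=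
  ∃ (r : ℕ) (K : Fin r → Matrix (Fin d × Fin d) (Fin d) ℂ),
    (∑ i, (K i)ᴴ * K i = 1) ∧
    ∀ ρ ∈ S₀, ptr2 (∑ i, K i * ρ * (K i)ᴴ) = ρ ∧ ptr1 (∑ i, K i * ρ * (K i)ᴴ) = ρ

/-- Incompatibility dimension of the pair (id, id). -/
def chiIncompId (d : ℕ) : ℕ :=
  sInf {k : ℕ | ∃ S₀ : Set (Matrix (Fin d) (Fin d) ℂ),
    (∀ ρ ∈ S₀, IsState ρ) ∧ ¬ IdPairSCompat S₀ ∧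
    k = Module.finrank ℝ (vectorSpan ℝ S₀) + 1}

/-- Compatibility dimension of the pair (id, id). -/
def chiCompId (d : ℕ) : ℕ :=
  sSup {k : ℕ | ∃ S₀ : Set (Matrix (Fin d) (Fin d) ℂ),
    (∀ ρ ∈ S₀, IsState ρ) ∧ IdPairSCompat S₀ ∧
    k = Module.finrank ℝ (vectorSpan ℝ S₀) + 1}

/-
Let `ρ` and `σ` be fixed by both marginals of a channel, `ω = ρ + σ = s sᴴ`, and let `A = ρ ω⁻¹` on
the support of `ω`. Invariance of `ω` and `ρ` gives equality in a Schwarz inequality for the dual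
channel, so each Kraus operator `K` satisfies `K A s = (A ⊗ 1) K s` and `K A s = (1 ⊗ A) K s`, and
likewise for `Aᴴ`. As `Aᴴ ⊗ 1` and `1 ⊗ A` commute, `A` is normal on the support of `ω`; since also
`A ω = ω Aᴴ`, it is self-adjoint there, so `ρ = A ω = ω A` commutes with `ω` and hence with `σ`.
Conversely, commuting states share an orthonormal eigenbasis; measuring in it and preparing two
copies of the outcome broadcasts them.
-/

open scoped Kronecker

section Kraus

variable {ι m n : Type*} [Fintype ι] [Fintype m]

/-- The Heisenberg-picture dual `X ↦ ∑ᵢ Kᵢᴴ X Kᵢ` of the map with Kraus operators `K`. -/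
def krausDual (K : ι → Matrix m n ℂ) (X : Matrix m m ℂ) : Matrix n n ℂ :=
  ∑ i, (K i)ᴴ * X * K i

lemma trace_mul_krausDual [Fintype n] (K : ι → Matrix m n ℂ) (ρ : Matrix n n ℂ)
    (X : Matrix m m ℂ) :
    (ρ * krausDual K X).trace = ((∑ i, K i * ρ * (K i)ᴴ) * X).trace := by
  simp only [krausDual, Matrix.mul_sum, Matrix.sum_mul, trace_sum]
  refine Finset.sum_congr rfl fun i _ => ?_
  rw [← Matrix.mul_assoc, trace_mul_comm]
  simp only [Matrix.mul_assoc]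

lemma conjTranspose_krausDual (K : ι → Matrix m n ℂ) (X : Matrix m m ℂ) :
    (krausDual K X)ᴴ = krausDual K Xᴴ := by
  simp only [krausDual, conjTranspose_sum, conjTranspose_mul, conjTranspose_conjTranspose,
    Matrix.mul_assoc]

variable [Fintype n] [DecidableEq n]

lemma conjTranspose_mul_eq_sum {p q : Type*} {K : ι → Matrix m n ℂ} (hK : ∑ i, (K i)ᴴ * K i = 1)
    (X : Matrix n p ℂ) (Y : Matrix n q ℂ) :
    Xᴴ * Y = ∑ i, (K i * X)ᴴ * (K i * Y) := by
  calc Xᴴ * Y = Xᴴ * (∑ i, (K i)ᴴ * K i) * Y := by rw [hK, Matrix.mul_one]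
    _ = ∑ i, (K i * X)ᴴ * (K i * Y) := by
      simp only [Matrix.mul_sum, Matrix.sum_mul, conjTranspose_mul, Matrix.mul_assoc]

lemma sum_conjTranspose_mul_self_sub {K : ι → Matrix m n ℂ} (hK : ∑ i, (K i)ᴴ * K i = 1)
    (X : Matrix n n ℂ) (Y : Matrix m m ℂ) :
    ∑ i, (K i * X - Y * K i)ᴴ * (K i * X - Y * K i) =
      Xᴴ * X - Xᴴ * krausDual K Y - (krausDual K Y)ᴴ * X + krausDual K (Yᴴ * Y) := by
  rw [conjTranspose_mul_eq_sum hK X X, conjTranspose_krausDual]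
  simp only [krausDual, Matrix.mul_sum, Matrix.sum_mul, ← Finset.sum_sub_distrib,
    ← Finset.sum_add_distrib, conjTranspose_sub, conjTranspose_mul, Matrix.sub_mul, Matrix.mul_sub,
    Matrix.mul_assoc]
  exact Finset.sum_congr rfl fun i _ => by abel

variable [DecidableEq m]

/-- `ρ` is fixed by the channel that first applies the Kraus operators `K` and then restricts to
the subsystem whose observables are embedded by `E`. The condition is tested on observables. -/
def IsMarginalInvariant (K : ι → Matrix m n ℂ) (E : Matrix n n ℂ →⋆* Matrix m m ℂ)
    (ρ : Matrix n n ℂ) : Prop :=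
  ∀ X, (ρ * krausDual K (E X)).trace = (ρ * X).trace

/-- Every Kraus operator carries `X` to `E X` on the range of `s`. In the applications
`s * sᴴ` is an invariant positive semidefinite matrix, and the range of `s` is its support. -/
def Intertwines (K : ι → Matrix m n ℂ) (E : Matrix n n ℂ →⋆* Matrix m m ℂ)
    (s X : Matrix n n ℂ) : Prop :=
  ∀ i, K i * X * s = E X * K i * s

variable {K : ι → Matrix m n ℂ} {E F : Matrix n n ℂ →⋆* Matrix m m ℂ} {s : Matrix n n ℂ}

lemma IsMarginalInvariant.add {ρ σ : Matrix n n ℂ} (hρ : IsMarginalInvariant K E ρ)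
    (hσ : IsMarginalInvariant K E σ) :
    IsMarginalInvariant K E (ρ + σ) := fun X => by
  rw [Matrix.add_mul, Matrix.add_mul, trace_add, trace_add, hρ X, hσ X]

/- The hypotheses make the trace of `s * sᴴ` against
`∑ i, (K i * X - E X * K i)ᴴ * (K i * X - E X * K i)` vanish. -/
lemma Intertwines.of_trace_eq (hK : ∑ i, (K i)ᴴ * K i = 1)
    (hs : IsMarginalInvariant K E (s * sᴴ)) {X : Matrix n n ℂ}
    (hX : (s * sᴴ * (Xᴴ * krausDual K (E X))).trace = (s * sᴴ * (Xᴴ * X)).trace) :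
    Intertwines K E s X := by
  have hX' : (s * sᴴ * ((krausDual K (E X))ᴴ * X)).trace = (s * sᴴ * (Xᴴ * X)).trace := by
    have h := congrArg star hX
    rw [← trace_conjTranspose, ← trace_conjTranspose] at h
    simpa only [conjTranspose_mul, conjTranspose_conjTranspose,
      trace_mul_comm _ (s * sᴴ)] using h
  have hsq : ∑ i, (((K i * X - E X * K i) * s)ᴴ * ((K i * X - E X * K i) * s)).trace = 0 := by
    calc _ = (s * sᴴ * ∑ i, (K i * X - E X * K i)ᴴ * (K i * X - E X * K i)).trace := by
          rw [Matrix.mul_assoc, trace_mul_comm, Matrix.mul_sum, Matrix.sum_mul, trace_sum]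
          simp only [conjTranspose_mul, Matrix.mul_assoc]
      _ = 0 := by
          rw [sum_conjTranspose_mul_self_sub hK, ← star_eq_conjTranspose (E X), ← map_star,
            ← map_mul, star_eq_conjTranspose]
          simp only [Matrix.mul_add, Matrix.mul_sub, trace_add, trace_sub, hX, hX', hs (Xᴴ * X)]
          ring
  rw [Finset.sum_eq_zero_iff_of_nonneg
    fun i _ => (posSemidef_conjTranspose_mul_self _).trace_nonneg] at hsq
  intro i
  have h := trace_conjTranspose_mul_self_eq_zero_iff.mp (hsq i (Finset.mem_univ i))
  rwa [Matrix.sub_mul, sub_eq_zero] at h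

lemma Intertwines.of_isMarginalInvariant (hK : ∑ i, (K i)ᴴ * K i = 1)
    (hs : IsMarginalInvariant K E (s * sᴴ)) {A : Matrix n n ℂ}
    (hA : IsMarginalInvariant K E (s * sᴴ * Aᴴ)) : Intertwines K E s A :=
  .of_trace_eq hK hs <| by rw [← Matrix.mul_assoc, hA A, Matrix.mul_assoc]

lemma Intertwines.krausDual_mul (hK : ∑ i, (K i)ᴴ * K i = 1) {A : Matrix n n ℂ}
    (hA : Intertwines K E s A) : krausDual K (E A) * s = A * s := by
  calc krausDual K (E A) * s = ∑ i, (K i)ᴴ * (E A * K i * s) := by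
        simp only [krausDual, Matrix.sum_mul, Matrix.mul_assoc]
    _ = (∑ i, (K i)ᴴ * K i) * (A * s) := by
        simp only [← hA _, Matrix.sum_mul, Matrix.mul_assoc]
    _ = A * s := by rw [hK, Matrix.one_mul]

lemma Intertwines.conjTranspose (hK : ∑ i, (K i)ᴴ * K i = 1)
    (hs : IsMarginalInvariant K E (s * sᴴ)) {C : Matrix n n ℂ}
    (hA : Intertwines K E s (C * (s * sᴴ))) :
    Intertwines K E s (C * (s * sᴴ))ᴴ := by
  have hfix : sᴴ * krausDual K (E (C * (s * sᴴ))ᴴ) = sᴴ * (C * (s * sᴴ))ᴴ := by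
    rw [← star_eq_conjTranspose (C * _), map_star, star_eq_conjTranspose, star_eq_conjTranspose,
      ← conjTranspose_krausDual, ← conjTranspose_mul, ← conjTranspose_mul, hA.krausDual_mul hK]
  refine .of_trace_eq hK hs ?_
  rw [conjTranspose_conjTranspose, Matrix.mul_assoc C, Matrix.mul_assoc s sᴴ (krausDual _ _), hfix]
  simp only [Matrix.mul_assoc]

lemma Intertwines.conjTranspose_mul_comm (hK : ∑ i, (K i)ᴴ * K i = 1)
    (hEF : ∀ X Y, Commute (E X) (F Y)) {X Y : Matrix n n ℂ}
    (hX : Intertwines K E s X) (hX' : Intertwines K E s Xᴴ)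
    (hY : Intertwines K F s Y) (hY' : Intertwines K F s Yᴴ) :
    sᴴ * (Xᴴ * Y) * s = sᴴ * (Y * Xᴴ) * s := by
  have hE : (E X)ᴴ = E Xᴴ := (map_star E X).symm
  have hF : (F Yᴴ)ᴴ = F Y := by
    rw [← star_eq_conjTranspose Y, map_star, star_eq_conjTranspose, conjTranspose_conjTranspose]
  calc sᴴ * (Xᴴ * Y) * s = ∑ i, (K i * X * s)ᴴ * (K i * Y * s) := by
        simpa only [conjTranspose_mul, Matrix.mul_assoc] using
          conjTranspose_mul_eq_sum hK (X * s) (Y * s)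
    _ = ∑ i, (K i * s)ᴴ * (E Xᴴ * F Y) * (K i * s) := by
        simp only [hX _, hY _, conjTranspose_mul, hE, Matrix.mul_assoc]
    _ = ∑ i, (K i * s)ᴴ * (F Y * E Xᴴ) * (K i * s) := by rw [(hEF Xᴴ Y).eq]
    _ = ∑ i, (K i * Yᴴ * s)ᴴ * (K i * Xᴴ * s) := by
        simp only [hX' _, hY' _, conjTranspose_mul, hF, Matrix.mul_assoc]
    _ = sᴴ * (Y * Xᴴ) * s := by
        simpa only [conjTranspose_mul, conjTranspose_conjTranspose, Matrix.mul_assoc] using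
          (conjTranspose_mul_eq_sum hK (Yᴴ * s) (Xᴴ * s)).symm

end Kraus

lemma mul_eq_mul_conjTranspose_of_normal {n : Type*} [Fintype n] {s A : Matrix n n ℂ}
    (hA : A * (s * sᴴ) = s * sᴴ * Aᴴ) (hnormal : sᴴ * (Aᴴ * A) * s = sᴴ * (A * Aᴴ) * s) :
    s * sᴴ * A = s * sᴴ * Aᴴ := by
  have hcycle (M : Matrix n n ℂ) : (sᴴ * M * s).trace = (s * sᴴ * M).trace := by
    rw [trace_mul_comm, ← Matrix.mul_assoc]
  have hAA : (s * sᴴ * (A * A)).trace = (s * sᴴ * (Aᴴ * A)).trace := by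
    rw [← Matrix.mul_assoc (s * sᴴ) Aᴴ, ← hA, ← Matrix.mul_assoc, trace_mul_comm,
      ← Matrix.mul_assoc]
  have hAA' : (s * sᴴ * (Aᴴ * Aᴴ)).trace = (s * sᴴ * (Aᴴ * A)).trace := by
    rw [← Matrix.mul_assoc, ← hA, Matrix.mul_assoc, trace_mul_comm, Matrix.mul_assoc]
  have hnormal' := congrArg trace hnormal
  rw [hcycle, hcycle] at hnormal'
  have hsq : (sᴴ * (A - Aᴴ) * (sᴴ * (A - Aᴴ))ᴴ).trace = 0 := by
    calc _ = (s * sᴴ * ((A - Aᴴ) * (Aᴴ - A))).trace := by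
          rw [← hcycle]
          simp only [conjTranspose_mul, conjTranspose_sub, conjTranspose_conjTranspose,
            Matrix.mul_assoc]
      _ = 0 := by
          simp only [Matrix.sub_mul, Matrix.mul_sub, trace_sub, hAA, hAA', hnormal']
          ring
  have h := trace_mul_conjTranspose_self_eq_zero_iff.mp hsq
  rw [Matrix.mul_sub, sub_eq_zero] at h
  rw [Matrix.mul_assoc, h, Matrix.mul_assoc]

lemma exists_comp_eq_of_ker_le_ker {𝕜 U V W : Type*} [DivisionRing 𝕜] [AddCommGroup U]
    [Module 𝕜 U] [AddCommGroup V] [Module 𝕜 V] [AddCommGroup W] [Module 𝕜 W] {f : U →ₗ[𝕜] V}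
    {g : U →ₗ[𝕜] W} (h : LinearMap.ker f ≤ LinearMap.ker g) : ∃ c : V →ₗ[𝕜] W, c ∘ₗ f = g := by
  obtain ⟨l, hl⟩ := LinearMap.exists_leftInverse_of_injective
    ((LinearMap.ker f).liftQ f le_rfl) (Submodule.ker_liftQ_eq_bot' _ f rfl)
  refine ⟨(LinearMap.ker f).liftQ g h ∘ₗ l, LinearMap.ext fun x => ?_⟩
  have hx := LinearMap.congr_fun hl (Submodule.Quotient.mk x)
  rw [LinearMap.comp_apply, Submodule.liftQ_apply, LinearMap.id_apply] at hx
  rw [LinearMap.comp_apply, LinearMap.comp_apply, hx, Submodule.liftQ_apply]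

lemma exists_eq_mul_of_mulVec_eq_zero {𝕜 l m n : Type*} [Field 𝕜] [Fintype m] [Fintype n]
    {M : Matrix m n 𝕜} {N : Matrix l n 𝕜} (h : ∀ x, M *ᵥ x = 0 → N *ᵥ x = 0) :
    ∃ C : Matrix l m 𝕜, N = C * M := by
  classical
  obtain ⟨c, hc⟩ := exists_comp_eq_of_ker_le_ker (f := M.mulVecLin) (g := N.mulVecLin) h
  refine ⟨LinearMap.toMatrix' c, toLin'.injective ?_⟩
  rw [toLin'_mul, toLin'_toMatrix']
  exact hc.symm

section NoBroadcasting

variable {n : Type*} [Fintype n]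

open scoped MatrixOrder Matrix.Norms.L2Operator in
lemma exists_eq_mul_conjTranspose {ω : Matrix n n ℂ} (hω : ω.PosSemidef) :
    ∃ s : Matrix n n ℂ, ω = s * sᴴ := by
  classical
  obtain ⟨B, hB⟩ := CStarAlgebra.nonneg_iff_eq_star_mul_self.mp hω.nonneg
  exact ⟨Bᴴ, by rwa [conjTranspose_conjTranspose]⟩

lemma mulVec_eq_zero_of_add_mulVec_eq_zero {ρ σ : Matrix n n ℂ} (hρ : ρ.PosSemidef)
    (hσ : σ.PosSemidef) {x : n → ℂ} (hx : (ρ + σ) *ᵥ x = 0) : ρ *ᵥ x = 0 := by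
  rw [← (hρ.add hσ).dotProduct_mulVec_zero_iff, add_mulVec, dotProduct_add,
    add_eq_zero_iff_of_nonneg (hρ.dotProduct_mulVec_nonneg x) (hσ.dotProduct_mulVec_nonneg x)] at hx
  exact (hρ.dotProduct_mulVec_zero_iff x).mp hx.1

-- `C` plays the role of `ρ * (ρ + σ)⁻²`, where `ρ + σ` need not be invertible.
lemma exists_eq_mul_add_mul_add {ρ σ : Matrix n n ℂ} (hρ : ρ.PosSemidef) (hσ : σ.PosSemidef) :
    ∃ C : Matrix n n ℂ, ρ = C * (ρ + σ) * (ρ + σ) := by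
  obtain ⟨C, hC⟩ : ∃ C : Matrix n n ℂ, ρ = C * ((ρ + σ)ᴴ * (ρ + σ)) :=
    exists_eq_mul_of_mulVec_eq_zero fun x hx =>
      mulVec_eq_zero_of_add_mulVec_eq_zero hρ hσ ((conjTranspose_mul_self_mulVec_eq_zero _ x).mp hx)
  rw [(hρ.add hσ).1.eq, ← Matrix.mul_assoc] at hC
  exact ⟨C, hC⟩

theorem IsMarginalInvariant.commute {ι m : Type*} [Fintype ι] [Fintype m] [DecidableEq m]
    [DecidableEq n] {K : ι → Matrix m n ℂ} (hK : ∑ i, (K i)ᴴ * K i = 1)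
    {E F : Matrix n n ℂ →⋆* Matrix m m ℂ}
    (hEF : ∀ X Y, Commute (E X) (F Y)) {ρ σ : Matrix n n ℂ} (hρ : ρ.PosSemidef)
    (hσ : σ.PosSemidef) (hρE : IsMarginalInvariant K E ρ) (hρF : IsMarginalInvariant K F ρ)
    (hσE : IsMarginalInvariant K E σ) (hσF : IsMarginalInvariant K F σ) : Commute ρ σ := by
  obtain ⟨s, hs⟩ := exists_eq_mul_conjTranspose (hρ.add hσ)
  obtain ⟨C, hC⟩ := exists_eq_mul_add_mul_add hρ hσ
  have hωE := hρE.add hσE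
  have hωF := hρF.add hσF
  rw [hs] at hC hωE hωF
  set A := C * (s * sᴴ)
  have hρA : s * sᴴ * Aᴴ = ρ := by
    have h := congrArg conjTranspose hC
    rw [conjTranspose_mul, conjTranspose_mul s, conjTranspose_conjTranspose, hρ.1.eq] at h
    exact h.symm
  have hAE : Intertwines K E s A := .of_isMarginalInvariant hK hωE (hρA.symm ▸ hρE)
  have hAF : Intertwines K F s A := .of_isMarginalInvariant hK hωF (hρA.symm ▸ hρF)
  have hnormal : sᴴ * (Aᴴ * A) * s = sᴴ * (A * Aᴴ) * s :=
    hAE.conjTranspose_mul_comm hK hEF (hAE.conjTranspose hK hωE) hAF (hAF.conjTranspose hK hωF)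
  have hωA : s * sᴴ * A = ρ :=
    (mul_eq_mul_conjTranspose_of_normal (hC.symm.trans hρA.symm) hnormal).trans hρA
  have hρω : Commute ρ (ρ + σ) := by
    rw [hs]
    calc ρ * (s * sᴴ) = s * sᴴ * A * (s * sᴴ) := by rw [hωA]
      _ = s * sᴴ * ρ := by rw [Matrix.mul_assoc, ← hC]
  simpa using hρω.sub_right (Commute.refl ρ)

end NoBroadcasting

section Marginals

variable {n p : Type*} [Fintype n] [DecidableEq n] [Fintype p] [DecidableEq p]

/-- The embedding `X ↦ X ⊗ 1` of the observables of the first factor, whose dual is the partial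
trace over the second factor. -/
def leftEmbedding : Matrix n n ℂ →⋆* Matrix (n × p) (n × p) ℂ where
  toFun X := X ⊗ₖ (1 : Matrix p p ℂ)
  map_one' := one_kronecker_one
  map_mul' X Y := by rw [← mul_kronecker_mul, Matrix.one_mul]
  map_star' X := by
    rw [star_eq_conjTranspose, star_eq_conjTranspose, conjTranspose_kronecker, conjTranspose_one]

/-- The embedding `X ↦ 1 ⊗ X` of the observables of the second factor, whose dual is the partial
trace over the first factor. -/
def rightEmbedding : Matrix p p ℂ →⋆* Matrix (n × p) (n × p) ℂ where
  toFun X := (1 : Matrix n n ℂ) ⊗ₖ X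
  map_one' := one_kronecker_one
  map_mul' X Y := by rw [← mul_kronecker_mul, Matrix.one_mul]
  map_star' X := by
    rw [star_eq_conjTranspose, star_eq_conjTranspose, conjTranspose_kronecker, conjTranspose_one]

lemma commute_leftEmbedding_rightEmbedding (X : Matrix n n ℂ) (Y : Matrix p p ℂ) :
    Commute (leftEmbedding X) (rightEmbedding Y) := by
  change X ⊗ₖ 1 * 1 ⊗ₖ Y = 1 ⊗ₖ Y * X ⊗ₖ 1
  simp only [← mul_kronecker_mul, Matrix.one_mul, Matrix.mul_one]

variable {d : ℕ}

lemma trace_ptr2_mul (M : Matrix (Fin d × Fin d) (Fin d × Fin d) ℂ)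
    (X : Matrix (Fin d) (Fin d) ℂ) : (ptr2 M * X).trace = (M * leftEmbedding X).trace := by
  change _ = (M * X ⊗ₖ 1).trace
  simp only [trace, diag_apply, mul_apply, ptr2, of_apply, kroneckerMap_apply, one_apply,
    Fintype.sum_prod_type, Finset.sum_mul, mul_ite, mul_one, mul_zero, Finset.sum_ite_eq',
    Finset.mem_univ, if_true]
  exact Finset.sum_congr rfl fun _ _ => Finset.sum_comm

lemma trace_ptr1_mul (M : Matrix (Fin d × Fin d) (Fin d × Fin d) ℂ)
    (X : Matrix (Fin d) (Fin d) ℂ) : (ptr1 M * X).trace = (M * rightEmbedding X).trace := by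
  change _ = (M * 1 ⊗ₖ X).trace
  simp only [trace, diag_apply, mul_apply, ptr1, of_apply, kroneckerMap_apply, one_apply,
    Fintype.sum_prod_type_right, Finset.sum_mul, ite_mul, one_mul, zero_mul, mul_ite, mul_zero,
    Finset.sum_ite_eq', Finset.mem_univ, if_true]
  exact Finset.sum_congr rfl fun _ _ => Finset.sum_comm

theorem IdPairSCompat.commute {S₀ : Set (Matrix (Fin d) (Fin d) ℂ)} (h : IdPairSCompat S₀)
    {ρ σ : Matrix (Fin d) (Fin d) ℂ} (hρ : ρ.PosSemidef) (hσ : σ.PosSemidef) (hρS : ρ ∈ S₀)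
    (hσS : σ ∈ S₀) : Commute ρ σ := by
  obtain ⟨r, K, hK, hB⟩ := h
  have hleft {τ} (hτ : τ ∈ S₀) : IsMarginalInvariant K leftEmbedding τ := fun X => by
    rw [trace_mul_krausDual, ← trace_ptr2_mul, (hB τ hτ).1]
  have hright {τ} (hτ : τ ∈ S₀) : IsMarginalInvariant K rightEmbedding τ := fun X => by
    rw [trace_mul_krausDual, ← trace_ptr1_mul, (hB τ hτ).2]
  exact IsMarginalInvariant.commute hK commute_leftEmbedding_rightEmbedding hρ hσ (hleft hρS)
    (hright hρS) (hleft hσS) (hright hσS)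

end Marginals

lemma exists_orthonormalBasis_of_pairwise_commute {𝕜 E κ ι : Type*} [RCLike 𝕜]
    [NormedAddCommGroup E] [InnerProductSpace 𝕜 E] [FiniteDimensional 𝕜 E] [Fintype ι]
    (hcard : Fintype.card ι = Module.finrank 𝕜 E) {T : κ → E →ₗ[𝕜] E}
    (hT : ∀ j, (T j).IsSymmetric) (hcomm : Pairwise (Function.onFun Commute T)) :
    ∃ b : OrthonormalBasis ι 𝕜 E, ∀ j k, ∃ c : ℝ, T j (b k) = (c : 𝕜) • b k := by
  classical
  have hV := LinearMap.IsSymmetric.directSum_isInternal_of_pairwise_commute hT hcomm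
  let v (χ : κ → 𝕜) := stdOrthonormalBasis 𝕜 ↥(⨅ j, Module.End.eigenspace (T j) (χ j))
  let B := hV.collectedBasis fun χ => (v χ).toBasis
  have hB : Orthonormal 𝕜 B :=
    DirectSum.IsInternal.collectedBasis_orthonormal
      (LinearMap.IsSymmetric.orthogonalFamily_iInf_eigenspaces hT) hV fun χ => by
        simpa only [OrthonormalBasis.coe_toBasis] using (v χ).orthonormal
  let e := B.indexEquiv (Module.finBasis 𝕜 E) |>.trans (Fintype.equivFinOfCardEq hcard).symm
  have hBe : Orthonormal 𝕜 (B.reindex e) := by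
    simpa only [Module.Basis.coe_reindex] using hB.comp _ e.symm.injective
  refine ⟨(B.reindex e).toOrthonormalBasis hBe, fun j k => ?_⟩
  have hmem : B (e.symm k) ∈ Module.End.eigenspace (T j) ((e.symm k).1 j) :=
    (Submodule.mem_iInf _).mp (hV.collectedBasis_mem _ (e.symm k)) j
  have hreal := (hT j).conj_eigenvalue_eq_self
    (Module.End.hasEigenvalue_of_hasEigenvector ⟨hmem, B.ne_zero _⟩)
  refine ⟨RCLike.re ((e.symm k).1 j), ?_⟩
  rw [Module.Basis.coe_toOrthonormalBasis, Module.Basis.reindex_apply,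
    RCLike.conj_eq_iff_re.mp hreal]
  exact Module.End.mem_eigenspace_iff.mp hmem

section Diagonalization

variable {n : Type*}

/-- The rank-one matrix `|u⟩⟨u|`, a pure state when `u` is a unit vector. -/
def ketBra (u : n → ℂ) : Matrix n n ℂ :=
  vecMulVec u (star u)

variable [Fintype n]

/-- The orthonormal basis `b` simultaneously diagonalizes all matrices in `S`, with real
eigenvalues. -/
def IsEigenbasis {ι : Type*} [Fintype ι] (b : OrthonormalBasis ι ℂ (EuclideanSpace ℂ n))
    (S : Set (Matrix n n ℂ)) : Prop :=
  ∀ M ∈ S, ∃ c : ι → ℝ, ∀ k, M *ᵥ (b k).ofLp = c k • (b k).ofLp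

lemma exists_isEigenbasis {S : Set (Matrix n n ℂ)} (hS : ∀ M ∈ S, M.IsHermitian)
    (hcomm : S.Pairwise Commute) :
    ∃ b : OrthonormalBasis n ℂ (EuclideanSpace ℂ n), IsEigenbasis b S := by
  classical
  obtain ⟨b, hb⟩ := exists_orthonormalBasis_of_pairwise_commute
    (T := fun M : S => (M : Matrix n n ℂ).toEuclideanLin) finrank_euclideanSpace.symm
    (fun M => isSymmetric_toEuclideanLin_iff.mpr (hS M M.2))
    fun M N hMN => (hcomm M.2 N.2 (Subtype.coe_ne_coe.mpr hMN)).map (toLpLinAlgEquiv 2)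
  refine ⟨b, fun M hM => ?_⟩
  choose c hc using hb ⟨M, hM⟩
  exact ⟨c, fun k => congrArg WithLp.ofLp (hc k)⟩

lemma star_dotProduct_orthonormalBasis {ι : Type*} [Fintype ι]
    (b : OrthonormalBasis ι ℂ (EuclideanSpace ℂ n)) (k : ι) :
    star (b k).ofLp ⬝ᵥ (b k).ofLp = 1 := by
  rw [dotProduct_comm, ← EuclideanSpace.inner_eq_star_dotProduct, b.inner_eq_one]

lemma trace_ketBra_orthonormalBasis {ι : Type*} [Fintype ι]
    (b : OrthonormalBasis ι ℂ (EuclideanSpace ℂ n)) (k : ι) : (ketBra (b k).ofLp).trace = 1 := by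
  rw [ketBra, trace_vecMulVec, dotProduct_comm, star_dotProduct_orthonormalBasis]

lemma sum_ketBra_orthonormalBasis [DecidableEq n] {ι : Type*} [Fintype ι]
    (b : OrthonormalBasis ι ℂ (EuclideanSpace ℂ n)) : ∑ k, ketBra (b k).ofLp = 1 := by
  have h := congrArg (fun T => toEuclideanLin.symm T.toLinearMap) b.sum_rankOne_eq_id
  simp only [ContinuousLinearMap.toLinearMap_sum, map_sum,
    InnerProductSpace.symm_toEuclideanLin_rankOne] at h
  refine h.trans ?_
  rw [LinearEquiv.symm_apply_eq]
  exact (toLpLin_one 2).symm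

variable {ι : Type*} [Fintype ι] {b : OrthonormalBasis ι ℂ (EuclideanSpace ℂ n)}

lemma eq_sum_smul_ketBra {M : Matrix n n ℂ} {c : ι → ℝ}
    (hc : ∀ k, M *ᵥ (b k).ofLp = c k • (b k).ofLp) : M = ∑ k, c k • ketBra (b k).ofLp := by
  classical
  calc M = ∑ k, M * ketBra (b k).ofLp := by
        rw [← Matrix.mul_sum, sum_ketBra_orthonormalBasis, Matrix.mul_one]
    _ = ∑ k, c k • ketBra (b k).ofLp := by
        simp only [ketBra, mul_vecMulVec, hc, smul_vecMulVec]

lemma IsEigenbasis.finrank_span_le {S : Set (Matrix n n ℂ)} (hb : IsEigenbasis b S) :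
    Module.finrank ℝ (Submodule.span ℝ S) ≤ Fintype.card ι := by
  refine (Submodule.finrank_mono (Submodule.span_le.mpr fun M hM => ?_)).trans
    (finrank_range_le_card (R := ℝ) fun k => ketBra (b k).ofLp)
  obtain ⟨c, hc⟩ := hb M hM
  exact (Submodule.mem_span_range_iff_exists_fun ℝ).mpr ⟨c, (eq_sum_smul_ketBra hc).symm⟩

end Diagonalization

section Broadcasting

lemma ketBra_mul_eq_kronecker {m n : Type*} (u : m → ℂ) (v : n → ℂ) :
    ketBra (fun p : m × n => u p.1 * v p.2) = ketBra u ⊗ₖ ketBra v := by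
  ext p q
  simp only [ketBra, kroneckerMap_apply, vecMulVec_apply, Pi.star_apply, star_mul']
  ring

/-- The Kraus operators `|bₖ ⊗ bₖ⟩⟨bₖ|` of the channel that measures in the basis `b` and prepares
two copies of the outcome. -/
def copyKraus {ι n : Type*} [Fintype ι] [Fintype n] (b : OrthonormalBasis ι ℂ (EuclideanSpace ℂ n))
    (k : ι) : Matrix (n × n) n ℂ :=
  vecMulVec (fun p => b k p.1 * b k p.2) (star (b k).ofLp)

variable {ι n : Type*} [Fintype ι] [Fintype n] {b : OrthonormalBasis ι ℂ (EuclideanSpace ℂ n)}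

lemma sum_conjTranspose_copyKraus_mul_self [DecidableEq n] :
    ∑ k, (copyKraus b k)ᴴ * copyKraus b k = 1 := by
  rw [← sum_ketBra_orthonormalBasis b]
  refine Finset.sum_congr rfl fun k _ => ?_
  have hunit : (star fun p : n × n => b k p.1 * b k p.2) ⬝ᵥ (fun p => b k p.1 * b k p.2) = 1 := by
    rw [dotProduct_comm, ← trace_vecMulVec, ← ketBra, ketBra_mul_eq_kronecker, trace_kronecker,
      trace_ketBra_orthonormalBasis, one_mul]
  rw [copyKraus, conjTranspose_vecMulVec, star_star, vecMulVec_mul_vecMulVec, hunit, one_smul,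
    ketBra]

lemma copyKraus_mul_mul_conjTranspose {M : Matrix n n ℂ} {k : ι} {c : ℝ}
    (hc : M *ᵥ (b k).ofLp = c • (b k).ofLp) :
    copyKraus b k * M * (copyKraus b k)ᴴ = (c • ketBra (b k).ofLp) ⊗ₖ ketBra (b k).ofLp := by
  rw [smul_kronecker, ← ketBra_mul_eq_kronecker, copyKraus, conjTranspose_vecMulVec, star_star,
    Matrix.mul_assoc, mul_vecMulVec, hc, smul_vecMulVec, Matrix.mul_smul, vecMulVec_mul_vecMulVec,
    star_dotProduct_orthonormalBasis, one_smul, ketBra]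

variable {d : ℕ}

lemma ptr2_sum_kronecker (A B : ι → Matrix (Fin d) (Fin d) ℂ) :
    ptr2 (∑ k, A k ⊗ₖ B k) = ∑ k, (B k).trace • A k := by
  ext i j
  simp only [ptr2, of_apply, Matrix.sum_apply, kroneckerMap_apply, Matrix.smul_apply, trace,
    diag_apply, smul_eq_mul, Finset.sum_mul, mul_comm (A _ i j)]
  exact Finset.sum_comm

lemma ptr1_sum_kronecker (A B : ι → Matrix (Fin d) (Fin d) ℂ) :
    ptr1 (∑ k, A k ⊗ₖ B k) = ∑ k, (A k).trace • B k := by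
  ext i j
  simp only [ptr1, of_apply, Matrix.sum_apply, kroneckerMap_apply, Matrix.smul_apply, trace,
    diag_apply, smul_eq_mul, Finset.sum_mul]
  exact Finset.sum_comm

theorem IsEigenbasis.idPairSCompat {S₀ : Set (Matrix (Fin d) (Fin d) ℂ)}
    {b : OrthonormalBasis (Fin d) ℂ (EuclideanSpace ℂ (Fin d))} (hb : IsEigenbasis b S₀) :
    IdPairSCompat S₀ := by
  refine ⟨d, copyKraus b, sum_conjTranspose_copyKraus_mul_self, fun ρ hρ => ?_⟩
  obtain ⟨c, hc⟩ := hb ρ hρ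
  simp only [copyKraus_mul_mul_conjTranspose (hc _), ptr2_sum_kronecker, ptr1_sum_kronecker,
    trace_smul, trace_ketBra_orthonormalBasis, one_smul, smul_assoc]
  exact ⟨(eq_sum_smul_ketBra hc).symm, (eq_sum_smul_ketBra hc).symm⟩

theorem idPairSCompat_iff_pairwise_commute {S₀ : Set (Matrix (Fin d) (Fin d) ℂ)}
    (hS : ∀ ρ ∈ S₀, ρ.PosSemidef) : IdPairSCompat S₀ ↔ S₀.Pairwise Commute := by
  refine ⟨fun h ρ hρ σ hσ _ => h.commute (hS ρ hρ) (hS σ hσ) hρ hσ, fun h => ?_⟩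
  obtain ⟨b, hb⟩ := exists_isEigenbasis (fun ρ hρ => (hS ρ hρ).isHermitian) h
  exact hb.idPairSCompat

end Broadcasting

section Dimension

lemma finrank_vectorSpan_lt_finrank_span {𝕜 V W : Type*} [DivisionRing 𝕜] [AddCommGroup V]
    [Module 𝕜 V] [FiniteDimensional 𝕜 V] [AddCommGroup W] [Module 𝕜 W] {S : Set V}
    (hne : S.Nonempty) (f : V →ₗ[𝕜] W) {c : W} (hc : c ≠ 0) (hf : ∀ x ∈ S, f x = c) :
    Module.finrank 𝕜 (vectorSpan 𝕜 S) < Module.finrank 𝕜 (Submodule.span 𝕜 S) := by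
  have hker : vectorSpan 𝕜 S ≤ LinearMap.ker f := by
    rw [vectorSpan_def, Submodule.span_le]
    rintro _ ⟨x, hx, y, hy, rfl⟩
    simp [hf x hx, hf y hy]
  have hle : vectorSpan 𝕜 S ≤ Submodule.span 𝕜 S := by
    rw [vectorSpan_def, Submodule.span_le]
    rintro _ ⟨x, hx, y, hy, rfl⟩
    exact Submodule.sub_mem _ (Submodule.subset_span hx) (Submodule.subset_span hy)
  obtain ⟨x, hx⟩ := hne
  refine Submodule.finrank_lt_finrank_of_lt (lt_of_le_not_ge hle fun hge => hc ?_)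
  rw [← hf x hx]
  exact hker (hge (Submodule.subset_span hx))

lemma finrank_vectorSpan_pair {𝕜 V : Type*} [DivisionRing 𝕜] [AddCommGroup V] [Module 𝕜 V]
    {x y : V} (h : x ≠ y) : Module.finrank 𝕜 (vectorSpan 𝕜 {x, y}) = 1 := by
  rw [vectorSpan_pair, finrank_span_singleton (vsub_ne_zero.mpr h)]

lemma subsingleton_of_finrank_vectorSpan_eq_zero {𝕜 V : Type*} [DivisionRing 𝕜] [AddCommGroup V]
    [Module 𝕜 V] [FiniteDimensional 𝕜 V] {S : Set V}
    (h : Module.finrank 𝕜 (vectorSpan 𝕜 S) = 0) : S.Subsingleton := by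
  rw [Submodule.finrank_eq_zero] at h
  exact (vectorSpan_eq_bot_iff_subsingleton 𝕜).mp h

variable {n ι : Type*} [Fintype n] [Fintype ι] (b : OrthonormalBasis ι ℂ (EuclideanSpace ℂ n))

lemma ketBra_mulVec_orthonormalBasis [DecidableEq ι] (k l : ι) :
    ketBra (b k).ofLp *ᵥ (b l).ofLp = (if k = l then 1 else 0 : ℝ) • (b l).ofLp := by
  rw [ketBra, vecMulVec_mulVec, dotProduct_comm, ← EuclideanSpace.inner_eq_star_dotProduct,
    b.inner_eq_ite]
  split_ifs with hkl
  · simp [hkl]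
  · simp

lemma isEigenbasis_range_ketBra : IsEigenbasis b (Set.range fun k => ketBra (b k).ofLp) := by
  classical
  rintro _ ⟨k, rfl⟩
  exact ⟨_, ketBra_mulVec_orthonormalBasis b k⟩

lemma linearIndependent_ketBra : LinearIndependent ℝ fun k => ketBra (b k).ofLp := by
  classical
  rw [Fintype.linearIndependent_iff]
  intro c hc l
  have h : c l • (b l).ofLp = 0 := by
    simpa [sum_mulVec, smul_mulVec, ketBra_mulVec_orthonormalBasis] using
      congrArg (· *ᵥ (b l).ofLp) hc
  exact (smul_eq_zero.mp h).resolve_right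
    fun h0 => b.orthonormal.ne_zero l (WithLp.ofLp_injective 2 h0)

lemma finrank_vectorSpan_range_ketBra [Nonempty ι] :
    Module.finrank ℝ (vectorSpan ℝ (Set.range fun k => ketBra (b k).ofLp)) + 1 = Fintype.card ι :=
  (linearIndependent_ketBra b).affineIndependent.finrank_vectorSpan_add_one

end Dimension

section States

variable {n : Type*} [Fintype n] [DecidableEq n]

lemma finrank_vectorSpan_add_one_le_card [Nonempty n] {S : Set (Matrix n n ℂ)}
    (hS : ∀ ρ ∈ S, IsState ρ) (hcomm : S.Pairwise Commute) :
    Module.finrank ℝ (vectorSpan ℝ S) + 1 ≤ Fintype.card n := by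
  rcases S.eq_empty_or_nonempty with rfl | hne
  · rw [vectorSpan_empty, finrank_bot]
    exact Fintype.card_pos
  · obtain ⟨b, hb⟩ := exists_isEigenbasis (fun ρ hρ => (hS ρ hρ).1.isHermitian) hcomm
    exact (finrank_vectorSpan_lt_finrank_span hne (traceLinearMap n ℝ ℂ) one_ne_zero
      fun ρ hρ => (hS ρ hρ).2).trans_le hb.finrank_span_le

lemma isState_ketBra {u : n → ℂ} (hu : star u ⬝ᵥ u = 1) : IsState (ketBra u) :=
  ⟨posSemidef_vecMulVec_self_star u, by rw [ketBra, trace_vecMulVec, dotProduct_comm, hu]⟩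

lemma exists_isState_not_commute [Nontrivial n] :
    ∃ ρ σ : Matrix n n ℂ, IsState ρ ∧ IsState σ ∧ ¬ Commute ρ σ := by
  obtain ⟨i, j, hij⟩ := exists_pair_ne n
  let v : n → ℂ := Pi.single i 1 + Pi.single j 1
  have hv : star v ⬝ᵥ v = 2 := by
    simp [v, hij, hij.symm, one_add_one_eq_two]
  refine ⟨ketBra (Pi.single i 1), (1 / 2 : ℂ) • ketBra v, isState_ketBra (by simp), ⟨?_, ?_⟩, ?_⟩
  · exact (posSemidef_vecMulVec_self_star v).smul (by positivity)
  · rw [trace_smul, ketBra, trace_vecMulVec, dotProduct_comm, hv]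
    norm_num
  · intro h
    have hentry := congrFun₂ h.eq i j
    simp [ketBra, v, hij, hij.symm, mul_apply, vecMulVec_apply, Pi.single_apply] at hentry

variable {d : ℕ}

theorem not_idPairSCompat_of_not_commute {S₀ : Set (Matrix (Fin d) (Fin d) ℂ)}
    (hS : ∀ ρ ∈ S₀, IsState ρ) (hne : ∃ ρ ∈ S₀, ∃ σ ∈ S₀, ρ * σ ≠ σ * ρ) :
    ¬ IdPairSCompat S₀ := fun h => by
  obtain ⟨ρ, hρ, σ, hσ, hρσ⟩ := hne
  exact hρσ (h.commute (hS ρ hρ).1 (hS σ hσ).1 hρ hσ).eq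

theorem chiIncompId_eq_two (hd : 2 ≤ d) : chiIncompId d = 2 := by
  have : Nontrivial (Fin d) := Fin.nontrivial_iff_two_le.mpr hd
  refine IsLeast.csInf_eq ⟨?_, ?_⟩
  · obtain ⟨ρ, σ, hρ, hσ, hcomm⟩ := exists_isState_not_commute (n := Fin d)
    have hS : ∀ τ ∈ ({ρ, σ} : Set _), IsState τ := by simp [hρ, hσ]
    have hne : ρ ≠ σ := by
      rintro rfl
      exact hcomm (.refl ρ)
    exact ⟨{ρ, σ}, hS, not_idPairSCompat_of_not_commute hS ⟨ρ, by simp, σ, by simp, hcomm⟩,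
      by rw [finrank_vectorSpan_pair hne]⟩
  · rintro k ⟨S₀, hS, hincomp, rfl⟩
    have hpos : Module.finrank ℝ (vectorSpan ℝ S₀) ≠ 0 := fun h0 =>
      hincomp <| (idPairSCompat_iff_pairwise_commute fun ρ hρ => (hS ρ hρ).1).mpr <|
        (subsingleton_of_finrank_vectorSpan_eq_zero h0).pairwise _
    omega

theorem chiCompId_eq (hd : d ≠ 0) : chiCompId d = d := by
  have : NeZero d := ⟨hd⟩
  refine IsGreatest.csSup_eq ⟨?_, ?_⟩
  · let b := EuclideanSpace.basisFun (Fin d) ℂ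
    refine ⟨Set.range fun k => ketBra (b k).ofLp, ?_, (isEigenbasis_range_ketBra b).idPairSCompat,
      by rw [finrank_vectorSpan_range_ketBra, Fintype.card_fin]⟩
    rintro _ ⟨k, rfl⟩
    exact isState_ketBra (star_dotProduct_orthonormalBasis b k)
  · rintro k ⟨S₀, hS, hcomp, rfl⟩
    have hcomm := (idPairSCompat_iff_pairwise_commute fun ρ hρ => (hS ρ hρ).1).mp hcomp
    simpa only [Fintype.card_fin] using finrank_vectorSpan_add_one_le_card hS hcomm

end States

/-- Two copies of the identity channel are `S₀`-compatible iff `S₀` is broadcastable;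
if `S₀` contains two noncommuting states, the pair is `S₀`-incompatible; and
`χ_incomp(id,id) = 2`, `χ_comp(id,id) = d`. -/
theorem identity_channels_chi (d : ℕ) (hd : 2 ≤ d) :
    (∀ S₀ : Set (Matrix (Fin d) (Fin d) ℂ), (∀ ρ ∈ S₀, IsState ρ) →
      (IdPairSCompat S₀ ↔ Broadcastable S₀)) ∧
    (∀ S₀ : Set (Matrix (Fin d) (Fin d) ℂ), (∀ ρ ∈ S₀, IsState ρ) →
      (∃ ρ ∈ S₀, ∃ σ ∈ S₀, ρ * σ ≠ σ * ρ) → ¬ IdPairSCompat S₀) ∧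
    chiIncompId d = 2 ∧ chiCompId d = d := by
  exact ⟨fun _ _ => Iff.rfl, fun _ => not_idPairSCompat_of_not_commute, chiIncompId_eq_two hd,
    chiCompId_eq (by omega)⟩
end
end

section
/- Restriction to the equatorial disk is faithful for incompatibility: the noisy qubit observables A^{tx}, A^{ty} are incompatible (as observables on all qubit states) if and only if they are S_D-incompatible, where S_D = {(1/2)(I + v·σ) : |v| ≤ 1, v₃ = 0}, if and only if their restrictions to S_D are incompatible as observables on the disk state space S_D. -/
open Matrix ComplexOrder

noncomputable section

abbrev Mat2 := Matrix (Fin 2) (Fin 2) ℂ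

def sigma1 : Mat2 := !![0, 1; 1, 0]
def sigma2 : Mat2 := !![0, -Complex.I; Complex.I, 0]

def Atx (t : ℝ) (s : Bool) : Mat2 :=
  ((1 : ℂ) / 2) • ((1 : Mat2) + (if s then (1 : ℂ) else -1) • ((t : ℂ) • sigma1))

def Aty (t : ℝ) (s : Bool) : Mat2 :=
  ((1 : ℂ) / 2) • ((1 : Mat2) + (if s then (1 : ℂ) else -1) • ((t : ℂ) • sigma2))

def IsPOVM {ι : Type*} [Fintype ι] {n : Type*} [Fintype n] [DecidableEq n]
    (G : ι → Matrix n n ℂ) : Prop :=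
  (∀ i, (G i).PosSemidef) ∧ ∑ i, G i = 1

/-- Membership of a Bloch vector in the equatorial unit disk. -/
def inDisk (v : ℝ × ℝ) : Prop := Real.sqrt (v.1 ^ 2 + v.2 ^ 2) ≤ 1

/-- The qubit state with equatorial Bloch vector `v`. -/
def diskState (v : ℝ × ℝ) : Mat2 :=
  ((1 : ℂ) / 2) • ((1 : Mat2) + (v.1 : ℂ) • sigma1 + (v.2 : ℂ) • sigma2)

/-- The disk state space `S_D = {(1/2)(I + v·σ) : |v| ≤ 1, v₃ = 0}`. -/
def SD : Set Mat2 := {ρ | ∃ v : ℝ × ℝ, inDisk v ∧ ρ = diskState v}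

/-- `A^{tx}` and `A^{ty}` are incompatible (full qubit compatibility). -/
def FullIncompat (t : ℝ) : Prop :=
  ¬ ∃ G : Bool × Bool → Mat2, IsPOVM G ∧
    (∀ x, G (x, true) + G (x, false) = Atx t x) ∧
    (∀ y, G (true, y) + G (false, y) = Aty t y)

/-- `A^{tx}` and `A^{ty}` are `S_D`-incompatible: no joint POVM reproduces their
outcome probabilities on all states of the disk `S_D`. -/
def SDIncompat (t : ℝ) : Prop :=
  ¬ ∃ G : Bool × Bool → Mat2, IsPOVM G ∧
    ∀ ρ ∈ SD,
      (∀ x, (ρ * (G (x, true) + G (x, false))).trace = (ρ * Atx t x).trace) ∧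
      (∀ y, (ρ * (G (true, y) + G (false, y))).trace = (ρ * Aty t y).trace)

/-- The value on the disk state `v` of a disk effect with coefficients
`c = (c₀, c₁, c₂)`: `(c₀ + c₁v₁ + c₂v₂)/2`. -/
def diskVal (c : ℝ × ℝ × ℝ) (v : ℝ × ℝ) : ℝ :=
  (c.1 + c.2.1 * v.1 + c.2.2 * v.2) / 2

/-- A disk effect: its value lies in `[0,1]` on all of the disk. -/
def IsDiskEffect (c : ℝ × ℝ × ℝ) : Prop :=
  ∀ v : ℝ × ℝ, inDisk v → 0 ≤ diskVal c v ∧ diskVal c v ≤ 1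

/-- The restrictions of `A^{tx}`, `A^{ty}` to the disk state space are incompatible as
observables on `S_D`: no four-outcome disk observable has them as marginals. -/
def DiskIncompat (t : ℝ) : Prop :=
  ¬ ∃ c : Bool × Bool → ℝ × ℝ × ℝ,
    (∀ p, IsDiskEffect (c p)) ∧
    (∀ v : ℝ × ℝ, inDisk v → ∑ p : Bool × Bool, diskVal (c p) v = 1) ∧
    (∀ v : ℝ × ℝ, inDisk v → ∀ x : Bool,
      diskVal (c (x, true)) v + diskVal (c (x, false)) v
        = (1 + (if x then t else -t) * v.1) / 2) ∧
    (∀ v : ℝ × ℝ, inDisk v → ∀ y : Bool,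
      diskVal (c (true, y)) v + diskVal (c (false, y)) v
        = (1 + (if y then t else -t) * v.2) / 2)

/-!
An affine functional that is nonnegative on the disk lies in the cone `√(c₁² + c₂²) ≤ c₀`, and
this is exactly what makes its extension `(1/2)(c₀I + c₁σ₁ + c₂σ₂)` to all qubit states a positive
operator. So disk observables extend to qubit observables without `σ₃` component. Conversely,
the restriction of a qubit observable to the disk is a disk observable. The extension is linear
and inverts the restriction on effects without `σ₃` component, such as those of `A^{tx}` and
`A^{ty}`, so both maps carry joint observables to joint observables.
-/

theorem posSemidef_fin_two_of_sq_norm_le {𝕜 : Type*} [RCLike 𝕜] {a d : ℝ} {w : 𝕜} (ha : 0 ≤ a)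
    (hd : 0 ≤ d) (hw : ‖w‖ ^ 2 ≤ a * d) : !![(a : 𝕜), w; star w, d].PosSemidef := by
  refine .of_dotProduct_mulVec_nonneg ?_ fun x => ?_
  · ext i j
    fin_cases i <;> fin_cases j <;> simp
  have form_eq : star x ⬝ᵥ (!![(a : 𝕜), w; star w, d] *ᵥ x) =
      ((a * ‖x 0‖ ^ 2 + d * ‖x 1‖ ^ 2 + 2 * RCLike.re (star (x 0) * w * x 1) : ℝ) : 𝕜) := by
    push_cast
    rw [← RCLike.add_conj, ← RCLike.conj_mul, ← RCLike.conj_mul]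
    simp only [mulVec, dotProduct, Fin.sum_univ_two, Pi.star_apply, of_apply, cons_val_zero,
      cons_val_one, cons_val', cons_val_fin_one, RCLike.star_def, map_mul, RCLike.conj_conj]
    ring
  have cross_le : |RCLike.re (star (x 0) * w * x 1)| ≤ ‖w‖ * (‖x 0‖ * ‖x 1‖) := by
    calc |RCLike.re (star (x 0) * w * x 1)| ≤ ‖star (x 0) * w * x 1‖ := RCLike.abs_re_le_norm _
      _ = ‖w‖ * (‖x 0‖ * ‖x 1‖) := by rw [norm_mul, norm_mul, norm_star]; ring
  have am_gm : 2 * (‖w‖ * (‖x 0‖ * ‖x 1‖)) ≤ a * ‖x 0‖ ^ 2 + d * ‖x 1‖ ^ 2 := by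
    refine le_of_sq_le_sq ?_ (by positivity)
    calc (2 * (‖w‖ * (‖x 0‖ * ‖x 1‖))) ^ 2 = 4 * ‖w‖ ^ 2 * (‖x 0‖ * ‖x 1‖) ^ 2 := by ring
      _ ≤ 4 * (a * d) * (‖x 0‖ * ‖x 1‖) ^ 2 := by gcongr
      _ ≤ (a * ‖x 0‖ ^ 2 + d * ‖x 1‖ ^ 2) ^ 2 := by
        linarith [sq_nonneg (a * ‖x 0‖ ^ 2 - d * ‖x 1‖ ^ 2)]
  rw [form_eq, RCLike.ofReal_nonneg]
  linarith [neg_abs_le (RCLike.re (star (x 0) * w * x 1))]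

theorem trace_mul_nonneg_of_posSemidef {n 𝕜 : Type*} [Fintype n] [RCLike 𝕜] {A B : Matrix n n 𝕜}
    (hA : A.PosSemidef) (hB : B.PosSemidef) : 0 ≤ (A * B).trace := by
  obtain ⟨m, u, rfl⟩ := posSemidef_iff_eq_sum_vecMulVec.1 hB
  rw [Matrix.mul_sum, trace_sum]
  refine Finset.sum_nonneg fun i _ => ?_
  rw [mul_vecMulVec, trace_vecMulVec, dotProduct_comm]
  exact hA.dotProduct_mulVec_nonneg (u i)

section JointMeasurability

variable {α β : Type*} [Fintype α] [Fintype β]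

/-- The marginals of a family indexed by pairs of outcomes; the values may be effects, their
coefficients or their probabilities in a fixed state. -/
def HasMarginals {E : Type*} [AddCommMonoid E] (G : α × β → E) (A : α → E) (B : β → E) : Prop :=
  (∀ x, ∑ y, G (x, y) = A x) ∧ ∀ y, ∑ x, G (x, y) = B y

theorem HasMarginals.map {E F Φ : Type*} [AddCommMonoid E] [AddCommMonoid F] [FunLike Φ E F]
    [AddMonoidHomClass Φ E F] {G : α × β → E} {A : α → E} {B : β → E}
    (h : HasMarginals G A B) (f : Φ) :
    HasMarginals (fun p => f (G p)) (fun x => f (A x)) (fun y => f (B y)) :=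
  ⟨fun x => by rw [← map_sum, h.1], fun y => by rw [← map_sum, h.2]⟩

variable {n : Type*} [Fintype n] [DecidableEq n]

/-- Compatibility of two observables on all states: both are marginals of one observable. -/
def JointlyMeasurable (A : α → Matrix n n ℂ) (B : β → Matrix n n ℂ) : Prop :=
  ∃ G, IsPOVM G ∧ HasMarginals G A B

/-- `S`-compatibility of two observables: the marginals of one observable have the outcome
probabilities of both in every state of `S`. -/
def JointlyMeasurableOn (S : Set (Matrix n n ℂ)) (A : α → Matrix n n ℂ) (B : β → Matrix n n ℂ) :
    Prop :=
  ∃ G, IsPOVM G ∧ ∀ ρ ∈ S, HasMarginals (fun p => (ρ * G p).trace)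
    (fun x => (ρ * A x).trace) (fun y => (ρ * B y).trace)

theorem JointlyMeasurable.on {A : α → Matrix n n ℂ} {B : β → Matrix n n ℂ}
    (h : JointlyMeasurable A B) (S : Set (Matrix n n ℂ)) : JointlyMeasurableOn S A B := by
  obtain ⟨G, hG, hGAB⟩ := h
  exact ⟨G, hG, fun ρ _ => hGAB.map (traceLinearMap n ℂ ℂ ∘ₗ LinearMap.mulLeft ℂ ρ)⟩

/-- An observable on the disk state space, each effect being given by its coefficients. -/
def IsDiskObservable {ι : Type*} [Fintype ι] (c : ι → ℝ × ℝ × ℝ) : Prop :=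
  (∀ i, IsDiskEffect (c i)) ∧ ∀ v, inDisk v → ∑ i, diskVal (c i) v = 1

/-- Compatibility of two observables on the disk state space. -/
def DiskJointlyMeasurable (a : α → ℝ × ℝ × ℝ) (b : β → ℝ × ℝ × ℝ) : Prop :=
  ∃ c, IsDiskObservable c ∧ HasMarginals c a b

end JointMeasurability

/-- The coefficients `(Re tr G, Re tr σ₁G, Re tr σ₂G)` of the restriction of the effect `G` to
the disk. -/
def diskCoeffs : Mat2 →ₗ[ℝ] ℝ × ℝ × ℝ where
  toFun G := (G.trace.re, (sigma1 * G).trace.re, (sigma2 * G).trace.re)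
  map_add' G H := by simp [mul_add]
  map_smul' r G := by simp

/-- The operator `(1/2)(c₀I + c₁σ₁ + c₂σ₂)`, which extends the disk effect `c` to all qubit states
and does not involve `σ₃`. -/
def equatorialEffect : ℝ × ℝ × ℝ →ₗ[ℝ] Mat2 where
  toFun c :=
    ((1 : ℂ) / 2) • ((c.1 : ℂ) • (1 : Mat2) + (c.2.1 : ℂ) • sigma1 + (c.2.2 : ℂ) • sigma2)
  map_add' c d := by
    simp only [Prod.fst_add, Prod.snd_add, Complex.ofReal_add]
    module
  map_smul' r c := by
    simp only [Prod.smul_fst, Prod.smul_snd, Complex.coe_smul, smul_assoc, RingHom.id_apply]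
    module

theorem equatorialEffect_eq (c : ℝ × ℝ × ℝ) :
    equatorialEffect c = !![((c.1 / 2 : ℝ) : ℂ), (⟨c.2.1, -c.2.2⟩ : ℂ) / 2;
      star ((⟨c.2.1, -c.2.2⟩ : ℂ) / 2), ((c.1 / 2 : ℝ) : ℂ)] := by
  ext i j
  fin_cases i <;> fin_cases j <;> apply Complex.ext <;>
    simp [equatorialEffect, sigma1, sigma2] <;> ring

theorem diskCoeffs_equatorialEffect (c : ℝ × ℝ × ℝ) : diskCoeffs (equatorialEffect c) = c := by
  ext <;> simp [diskCoeffs, equatorialEffect_eq, sigma1, sigma2, Matrix.trace_fin_two]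
  ring

theorem diskState_eq_equatorialEffect (v : ℝ × ℝ) : diskState v = equatorialEffect (1, v) := by
  simp [diskState, equatorialEffect]

theorem diskVal_diskCoeffs_one (v : ℝ × ℝ) : diskVal (diskCoeffs 1) v = 1 := by
  simp [diskVal, diskCoeffs, sigma1, sigma2, Matrix.trace_fin_two]

theorem equatorialEffect_diskCoeffs_one : equatorialEffect (diskCoeffs 1) = 1 := by
  ext i j
  fin_cases i <;> fin_cases j <;>
    simp [equatorialEffect_eq, diskCoeffs, sigma1, sigma2, Matrix.trace_fin_two, Complex.ext_iff]

theorem re_trace_diskState_mul (v : ℝ × ℝ) (G : Mat2) :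
    (diskState v * G).trace.re = diskVal (diskCoeffs G) v := by
  calc (diskState v * G).trace.re
      = (1 / 2) * (G.trace.re + v.1 * (sigma1 * G).trace.re + v.2 * (sigma2 * G).trace.re) := by
        simp [diskState, add_mul, mul_add]
    _ = diskVal (diskCoeffs G) v := by
        simp only [diskVal, diskCoeffs, LinearMap.coe_mk, AddHom.coe_mk]
        ring

theorem diskVal_sum {ι : Type*} (s : Finset ι) (c : ι → ℝ × ℝ × ℝ) (v : ℝ × ℝ) :
    diskVal (∑ i ∈ s, c i) v = ∑ i ∈ s, diskVal (c i) v := by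
  simp only [diskVal, Prod.fst_sum, Prod.snd_sum, Finset.sum_mul, ← Finset.sum_add_distrib,
    Finset.sum_div]

theorem eq_of_forall_inDisk_diskVal_eq {c d : ℝ × ℝ × ℝ}
    (h : ∀ v, inDisk v → diskVal c v = diskVal d v) : c = d := by
  have h_center := h (0, 0) (by simp [inDisk])
  have h_east := h (1, 0) (by simp [inDisk])
  have h_north := h (0, 1) (by simp [inDisk])
  simp only [diskVal, mul_zero, mul_one, add_zero] at h_center h_east h_north
  ext <;> linarith

theorem sqrt_le_of_diskVal_nonneg {c : ℝ × ℝ × ℝ} (h : ∀ v, inDisk v → 0 ≤ diskVal c v) :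
    √(c.2.1 ^ 2 + c.2.2 ^ 2) ≤ c.1 := by
  set r := √(c.2.1 ^ 2 + c.2.2 ^ 2)
  have r_sq : r * r = c.2.1 ^ 2 + c.2.2 ^ 2 := Real.mul_self_sqrt (by positivity)
  -- The state opposite to `c`; if `r = 0`, division by zero makes it the center of the disk.
  have opposite_mem : inDisk (-c.2.1 / r, -c.2.2 / r) := by
    rw [inDisk, Real.sqrt_le_one]
    simp only [div_pow, neg_sq, ← add_div, ← r_sq, ← sq]
    exact div_self_le_one _
  have val_eq : diskVal c (-c.2.1 / r, -c.2.2 / r) = (c.1 - r) / 2 := by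
    calc diskVal c (-c.2.1 / r, -c.2.2 / r) = (c.1 - (c.2.1 ^ 2 + c.2.2 ^ 2) / r) / 2 := by
          simp only [diskVal]; ring
      _ = (c.1 - r) / 2 := by rw [← r_sq, mul_self_div_self]
  linarith [h _ opposite_mem]

theorem posSemidef_equatorialEffect_of_sqrt_le {c : ℝ × ℝ × ℝ}
    (hc : √(c.2.1 ^ 2 + c.2.2 ^ 2) ≤ c.1) : (equatorialEffect c).PosSemidef := by
  have half_nonneg : 0 ≤ c.1 / 2 := div_nonneg ((Real.sqrt_nonneg _).trans hc) zero_le_two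
  have sq_norm_le : ‖(⟨c.2.1, -c.2.2⟩ : ℂ) / 2‖ ^ 2 ≤ c.1 / 2 * (c.1 / 2) := by
    rw [← sq, norm_div, Complex.norm_eq_sqrt_sq_add_sq, neg_sq, Complex.norm_ofNat]
    gcongr
  rw [equatorialEffect_eq]
  exact posSemidef_fin_two_of_sq_norm_le half_nonneg half_nonneg sq_norm_le

theorem diskVal_diskCoeffs_nonneg {G : Mat2} (hG : G.PosSemidef) {v : ℝ × ℝ} (hv : inDisk v) :
    0 ≤ diskVal (diskCoeffs G) v := by
  have state_posSemidef : (diskState v).PosSemidef := by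
    rw [diskState_eq_equatorialEffect]
    exact posSemidef_equatorialEffect_of_sqrt_le hv
  rw [← re_trace_diskState_mul]
  exact (Complex.nonneg_iff.1 (trace_mul_nonneg_of_posSemidef state_posSemidef hG)).1

section Restriction

variable {ι : Type*} [Fintype ι]

theorem IsPOVM.isDiskObservable {G : ι → Mat2} (hG : IsPOVM G) :
    IsDiskObservable fun i => diskCoeffs (G i) := by
  have nonneg (i : ι) {v : ℝ × ℝ} (hv : inDisk v) : 0 ≤ diskVal (diskCoeffs (G i)) v :=
    diskVal_diskCoeffs_nonneg (hG.1 i) hv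
  have sum_eq_one (v : ℝ × ℝ) : ∑ i, diskVal (diskCoeffs (G i)) v = 1 := by
    rw [← diskVal_sum, ← map_sum, hG.2, diskVal_diskCoeffs_one]
  refine ⟨fun i v hv => ⟨nonneg i hv, ?_⟩, fun v _ => sum_eq_one v⟩
  rw [← sum_eq_one v]
  exact Finset.single_le_sum (fun j _ => nonneg j hv) (Finset.mem_univ i)

theorem IsDiskObservable.isPOVM {c : ι → ℝ × ℝ × ℝ} (hc : IsDiskObservable c) :
    IsPOVM fun i => equatorialEffect (c i) := by
  refine ⟨fun i => posSemidef_equatorialEffect_of_sqrt_le <|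
    sqrt_le_of_diskVal_nonneg fun v hv => (hc.1 i v hv).1, ?_⟩
  have sum_eq : ∑ i, c i = diskCoeffs 1 := eq_of_forall_inDisk_diskVal_eq fun v hv => by
    rw [diskVal_sum, hc.2 v hv, diskVal_diskCoeffs_one]
  rw [← map_sum, sum_eq, equatorialEffect_diskCoeffs_one]

variable {α β : Type*} [Fintype α] [Fintype β]

theorem hasMarginals_iff_forall_diskVal {c : α × β → ℝ × ℝ × ℝ} {a : α → ℝ × ℝ × ℝ}
    {b : β → ℝ × ℝ × ℝ} : HasMarginals c a b ↔ ∀ v, inDisk v → HasMarginals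
      (fun p => diskVal (c p) v) (fun x => diskVal (a x) v) (fun y => diskVal (b y) v) := by
  simp only [HasMarginals, ← diskVal_sum]
  refine ⟨fun h v _ => ⟨fun x => by rw [h.1], fun y => by rw [h.2]⟩,
    fun h => ⟨fun x => ?_, fun y => ?_⟩⟩
  · exact eq_of_forall_inDisk_diskVal_eq fun v hv => (h v hv).1 x
  · exact eq_of_forall_inDisk_diskVal_eq fun v hv => (h v hv).2 y

theorem JointlyMeasurableOn.diskJointlyMeasurable {A : α → Mat2} {B : β → Mat2}
    (h : JointlyMeasurableOn SD A B) :
    DiskJointlyMeasurable (fun x => diskCoeffs (A x)) (fun y => diskCoeffs (B y)) := by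
  obtain ⟨G, hG, hGAB⟩ := h
  refine ⟨fun p => diskCoeffs (G p), hG.isDiskObservable,
    hasMarginals_iff_forall_diskVal.2 fun v hv => ?_⟩
  simpa only [Complex.coe_reAddGroupHom, re_trace_diskState_mul] using
    (hGAB (diskState v) ⟨v, hv, rfl⟩).map Complex.reAddGroupHom

theorem DiskJointlyMeasurable.jointlyMeasurable {a : α → ℝ × ℝ × ℝ} {b : β → ℝ × ℝ × ℝ}
    (h : DiskJointlyMeasurable a b) :
    JointlyMeasurable (fun x => equatorialEffect (a x)) (fun y => equatorialEffect (b y)) := by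
  obtain ⟨c, hc, hcab⟩ := h
  exact ⟨fun p => equatorialEffect (c p), hc.isPOVM, hcab.map equatorialEffect⟩

theorem disk_restriction_faithful_general (a : α → ℝ × ℝ × ℝ) (b : β → ℝ × ℝ × ℝ) :
    List.TFAE [
      JointlyMeasurable (fun x => equatorialEffect (a x)) (fun y => equatorialEffect (b y)),
      JointlyMeasurableOn SD (fun x => equatorialEffect (a x)) (fun y => equatorialEffect (b y)),
      DiskJointlyMeasurable a b] := by
  tfae_have 1 → 2 := fun h => h.on SD
  tfae_have 2 → 3 := fun h => by
    simpa only [diskCoeffs_equatorialEffect] using h.diskJointlyMeasurable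
  tfae_have 3 → 1 := fun h => h.jointlyMeasurable
  tfae_finish

end Restriction

/-- The disk coefficients of the effect `A^{tx}(±)`, where `true` is the outcome `+`. -/
def txCoeffs (t : ℝ) (s : Bool) : ℝ × ℝ × ℝ := (1, if s then t else -t, 0)

/-- The disk coefficients of the effect `A^{ty}(±)`, where `true` is the outcome `+`. -/
def tyCoeffs (t : ℝ) (s : Bool) : ℝ × ℝ × ℝ := (1, 0, if s then t else -t)

theorem equatorialEffect_txCoeffs (t : ℝ) (s : Bool) :
    equatorialEffect (txCoeffs t s) = Atx t s := by
  cases s <;> simp [equatorialEffect, txCoeffs, Atx]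

theorem equatorialEffect_tyCoeffs (t : ℝ) (s : Bool) :
    equatorialEffect (tyCoeffs t s) = Aty t s := by
  cases s <;> simp [equatorialEffect, tyCoeffs, Aty]

theorem diskVal_txCoeffs (t : ℝ) (s : Bool) (v : ℝ × ℝ) :
    diskVal (txCoeffs t s) v = (1 + (if s then t else -t) * v.1) / 2 := by
  simp only [diskVal, txCoeffs, zero_mul, add_zero]

theorem diskVal_tyCoeffs (t : ℝ) (s : Bool) (v : ℝ × ℝ) :
    diskVal (tyCoeffs t s) v = (1 + (if s then t else -t) * v.2) / 2 := by
  simp only [diskVal, tyCoeffs, zero_mul, add_zero]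

theorem fullIncompat_iff (t : ℝ) : FullIncompat t ↔ ¬ JointlyMeasurable
      (fun x => equatorialEffect (txCoeffs t x)) (fun y => equatorialEffect (tyCoeffs t y)) := by
  simp only [equatorialEffect_txCoeffs, equatorialEffect_tyCoeffs,
    FullIncompat, JointlyMeasurable, HasMarginals, Fintype.sum_bool]

theorem sdIncompat_iff (t : ℝ) : SDIncompat t ↔ ¬ JointlyMeasurableOn SD
      (fun x => equatorialEffect (txCoeffs t x)) (fun y => equatorialEffect (tyCoeffs t y)) := by
  simp only [equatorialEffect_txCoeffs, equatorialEffect_tyCoeffs,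
    SDIncompat, JointlyMeasurableOn, HasMarginals, Fintype.sum_bool, mul_add, trace_add]

theorem diskIncompat_iff (t : ℝ) :
    DiskIncompat t ↔ ¬ DiskJointlyMeasurable (txCoeffs t) (tyCoeffs t) := by
  simp only [DiskIncompat, DiskJointlyMeasurable, IsDiskObservable,
    hasMarginals_iff_forall_diskVal, diskVal_txCoeffs, diskVal_tyCoeffs]
  simp only [HasMarginals, Fintype.sum_bool, imp_and, forall_and, and_assoc]

/-- Restriction to the equatorial disk is faithful for incompatibility:
full incompatibility ↔ `S_D`-incompatibility ↔ incompatibility of the restrictions as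
disk observables. -/
theorem disk_restriction_faithful (t : ℝ) (ht0 : 0 ≤ t) (ht1 : t ≤ 1) :
    (FullIncompat t ↔ SDIncompat t) ∧ (SDIncompat t ↔ DiskIncompat t) := by
  have tfae := disk_restriction_faithful_general (txCoeffs t) (tyCoeffs t)
  rw [fullIncompat_iff, sdIncompat_iff, diskIncompat_iff]
  exact ⟨not_congr (tfae.out 0 1), not_congr (tfae.out 1 2)⟩
end
end

section
/- Two binary qubit observables with effects E₁ = (1/2)((1+w₁)I + m₁·σ) and E₂ = (1/2)((1+w₂)I + m₂·σ) (together with their complements) are compatible if and only if (1 − F₁² − F₂²)(1 − w₁²/F₁² − w₂²/F₂²) ≤ (m₁·m₂ − w₁w₂)², where F_j = (1/2)(√((1+w_j)² − |m_j|²) + √((1−w_j)² − |m_j|²)). -/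
open Matrix ComplexOrder RealInnerProductSpace

noncomputable section

def sigma3 : Mat2 := !![1, 0; 0, -1]

def pauliDot (a : EuclideanSpace ℝ (Fin 3)) : Mat2 :=
  (a 0 : ℂ) • sigma1 + (a 1 : ℂ) • sigma2 + (a 2 : ℂ) • sigma3

/-- The effect `E = (1/2)((1+w)I + m·σ)`. -/
def biasedEffect (w : ℝ) (m : EuclideanSpace ℝ (Fin 3)) : Mat2 :=
  ((1 : ℂ) / 2) • (((1 + w : ℝ) : ℂ) • (1 : Mat2) + pauliDot m)

/-- The binary observable `(E, I − E)`, `true` ↦ `E`. -/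
def biasedObs (w : ℝ) (m : EuclideanSpace ℝ (Fin 3)) (s : Bool) : Mat2 :=
  if s then biasedEffect w m else (1 : Mat2) - biasedEffect w m

/-- The quantity `F = (1/2)(√((1+w)² − |m|²) + √((1−w)² − |m|²))`. -/
def Fquant (w : ℝ) (m : EuclideanSpace ℝ (Fin 3)) : ℝ :=
  (Real.sqrt ((1 + w) ^ 2 - ‖m‖ ^ 2) + Real.sqrt ((1 - w) ^ 2 - ‖m‖ ^ 2)) / 2

/-!
The map `(t, v) ↦ t I + v·σ` identifies Minkowski space `ℝ × ℝ³` with the Hermitian matrices, the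
determinant with the Lorentz square and the positive semidefinite matrices with the closed future
cone. Writing `e` for `I` and `M_j = (w_j, m_j)`, compatibility asks for one vector `ζ` with the
four vectors `e ± M₁ ± M₂ + (±)(±) ζ` in the cone, and the inequality of the theorem becomes
`|M₁ + M₂|² |M₁ - M₂|² ≤ (ρ₁ + ρ₂)²`, where `|·|²` is the Lorentz square and
`ρ_j² = |e + M_j|² |e - M_j|²`.

Necessity when both `M₁ ± M₂` are spacelike is Ptolemy's inequality: on null vectors
`k_i = t_i (1, u_i)` the Lorentz product is `t_i t_j ‖u_i - u_j‖² / 2`, and extra dimensions make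
all the vectors involved null. When both are causal, the Lorentz square is monotone along the cone.

For sufficiency, if `M₁ + M₂` or its negative is in the cone, then `ζ = ±(M₁ + M₂) - e` works, and
similarly for `M₁ - M₂`. Otherwise there is a `ζ` giving the four vectors the same Lorentz square
`ν`, which satisfies `16 Δ ν = ((ρ₁ + ρ₂)² - N) (N - (ρ₁ - ρ₂)²)` with `N = |M₁ + M₂|² |M₁ - M₂|²`
and `Δ` the Gram determinant of `m₁`, `m₂`. If `N < (ρ₁ - ρ₂)²`, lengthen `m₁` and `m₂` until both
effects have an eigenvalue `0` or `1`. Either this ends with a causal `M₁ ± M₂`, or it ends with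
`ρ₁ = ρ₂ = 0 < N`, and then `N = (ρ₁ - ρ₂)²` somewhere on the way. Compatibility is inherited by the
original observables, which are mixtures of the lengthened ones with trivial ones.
-/

section Lorentz

variable {E : Type*} [NormedAddCommGroup E]

/-- The quadratic form of Minkowski space `ℝ × E`, with the time coordinate first and
signature `(1, dim E)`. -/
def lorentzSq (x : ℝ × E) : ℝ := x.1 ^ 2 - ‖x.2‖ ^ 2

lemma lorentzSq_neg (x : ℝ × E) : lorentzSq (-x) = lorentzSq x := by
  simp [lorentzSq]

lemma continuous_lorentzSq : Continuous (lorentzSq : ℝ × E → ℝ) := by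
  unfold lorentzSq
  fun_prop

section NormedSpace

variable [NormedSpace ℝ E] {x : ℝ × E}

lemma lorentzSq_smul (c : ℝ) (x : ℝ × E) : lorentzSq (c • x) = c ^ 2 * lorentzSq x := by
  simp only [lorentzSq, Prod.smul_fst, Prod.smul_snd, norm_smul, mul_pow, smul_eq_mul,
    Real.norm_eq_abs, sq_abs]
  ring

variable (E) in
/-- The closed future light cone of Minkowski space `ℝ × E`. -/
def futureCone : PointedCone ℝ (ℝ × E) where
  carrier := {x | ‖x.2‖ ≤ x.1}
  add_mem' hx hy := (norm_add_le _ _).trans (add_le_add hx hy)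
  zero_mem' := by simp
  smul_mem' c x hx := by
    change ‖(c : ℝ) • x.2‖ ≤ (c : ℝ) * x.1
    rw [norm_smul, Real.norm_of_nonneg c.2]
    exact mul_le_mul_of_nonneg_left hx c.2

lemma mem_futureCone : x ∈ futureCone E ↔ ‖x.2‖ ≤ x.1 := Iff.rfl

lemma fst_nonneg_of_mem_futureCone (hx : x ∈ futureCone E) : 0 ≤ x.1 := (norm_nonneg _).trans hx

lemma lorentzSq_nonneg (hx : x ∈ futureCone E) : 0 ≤ lorentzSq x :=
  sub_nonneg.2 (pow_le_pow_left₀ (norm_nonneg _) hx 2)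

lemma mem_futureCone_or_neg_mem_of_lorentzSq_nonneg (h : 0 ≤ lorentzSq x) :
    x ∈ futureCone E ∨ -x ∈ futureCone E := by
  have hx : ‖x.2‖ ≤ |x.1| := by
    simpa using sq_le_sq.1 (sub_nonneg.1 h)
  rcases abs_cases x.1 with ⟨h_abs, -⟩ | ⟨h_abs, -⟩ <;> rw [h_abs] at hx
  · exact .inl hx
  · exact .inr (by simpa [mem_futureCone] using hx)

lemma mem_futureCone_of_spacelike_sub {y : ℝ × E} (hx : 0 ≤ lorentzSq x) (hy : 0 ≤ lorentzSq y)
    (hxy : lorentzSq (x - y) < 0) (htime : 0 < (x + y).1) :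
    x ∈ futureCone E ∧ y ∈ futureCone E := by
  rcases mem_futureCone_or_neg_mem_of_lorentzSq_nonneg hx with hx | hx <;>
    rcases mem_futureCone_or_neg_mem_of_lorentzSq_nonneg hy with hy | hy
  · exact ⟨hx, hy⟩
  · have := lorentzSq_nonneg (add_mem hx hy)
    rw [← sub_eq_add_neg] at this
    linarith
  · have := lorentzSq_nonneg (add_mem hx hy)
    rw [← lorentzSq_neg, neg_add_rev, neg_neg, neg_add_eq_sub] at this
    linarith
  · have := fst_nonneg_of_mem_futureCone (add_mem hx hy)
    simp only [Prod.fst_add, Prod.fst_neg] at this htime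
    linarith

end NormedSpace

variable [InnerProductSpace ℝ E] {x y a₁ a₂ b₁ b₂ : ℝ × E}

/-- The symmetric bilinear form polarising `lorentzSq`. -/
def lorentzInner (x y : ℝ × E) : ℝ := x.1 * y.1 - ⟪x.2, y.2⟫

lemma lorentzInner_neg_left (x y : ℝ × E) : lorentzInner (-x) y = -lorentzInner x y := by
  simp only [lorentzInner, Prod.fst_neg, Prod.snd_neg, inner_neg_left]
  ring

lemma lorentzInner_neg_right (x y : ℝ × E) : lorentzInner x (-y) = -lorentzInner x y := by
  simp only [lorentzInner, Prod.fst_neg, Prod.snd_neg, inner_neg_right]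
  ring

lemma lorentzSq_add (x y : ℝ × E) :
    lorentzSq (x + y) = lorentzSq x + 2 * lorentzInner x y + lorentzSq y := by
  simp only [lorentzSq, lorentzInner, Prod.fst_add, Prod.snd_add, norm_add_sq_real]
  ring

lemma lorentzSq_sub (x y : ℝ × E) :
    lorentzSq (x - y) = lorentzSq x - 2 * lorentzInner x y + lorentzSq y := by
  simp only [lorentzSq, lorentzInner, Prod.fst_sub, Prod.snd_sub, norm_sub_sq_real]
  ring

lemma lorentzInner_nonneg (hx : x ∈ futureCone E) (hy : y ∈ futureCone E) :
    0 ≤ lorentzInner x y :=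
  sub_nonneg.2 <| (real_inner_le_norm _ _).trans <|
    mul_le_mul hx hy (norm_nonneg _) (fst_nonneg_of_mem_futureCone hx)

lemma lorentzSq_le_lorentzSq_add (hx : x ∈ futureCone E) (hy : y ∈ futureCone E) :
    lorentzSq x ≤ lorentzSq (x + y) := by
  rw [lorentzSq_add]
  linarith [lorentzInner_nonneg hx hy, lorentzSq_nonneg hy]

lemma two_mul_lorentzInner_le_lorentzSq_add (hx : x ∈ futureCone E) (hy : y ∈ futureCone E) :
    2 * lorentzInner x y ≤ lorentzSq (x + y) := by
  rw [lorentzSq_add]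
  linarith [lorentzSq_nonneg hx, lorentzSq_nonneg hy]

lemma neg_lorentzSq_sub_le_two_mul_lorentzInner (hx : x ∈ futureCone E) (hy : y ∈ futureCone E) :
    -lorentzSq (x - y) ≤ 2 * lorentzInner x y := by
  rw [lorentzSq_sub]
  linarith [lorentzSq_nonneg hx, lorentzSq_nonneg hy]

lemma exists_mul_dist_sq_eq_two_mul_lorentzInner {ι : Type*} [Fintype ι]
    (x : ι → ℝ × E) (hx : ∀ i, x i ∈ futureCone E) :
    ∃ u : ι → WithLp 2 (E × EuclideanSpace ℝ ι), ∀ i j, i ≠ j →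
      (x i).1 * (x j).1 * dist (u i) (u j) ^ 2 = 2 * lorentzInner (x i) (x j) := by
  classical
  -- An extra orthogonal spacelike component turns `x i` into a multiple of a null vector `(1, u i)`
  -- without changing the mutual products.
  let u (i : ι) : WithLp 2 (E × EuclideanSpace ℝ ι) :=
    (x i).1⁻¹ • .toLp 2 ((x i).2, EuclideanSpace.single i √(lorentzSq (x i)))
  have eq_zero {i : ι} (hi : (x i).1 = 0) : (x i).2 = 0 :=
    norm_le_zero_iff.1 (hi ▸ hx i)
  have norm_u {i : ι} (hi : (x i).1 ≠ 0) : ‖u i‖ ^ 2 = 1 := by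
    have h_null : ‖(x i).2‖ ^ 2 + lorentzSq (x i) = (x i).1 ^ 2 := add_sub_cancel _ _
    simp [u, norm_smul, mul_pow, WithLp.prod_norm_sq_eq_of_L2,
      Real.sq_sqrt (lorentzSq_nonneg (hx i)), h_null, hi]
  refine ⟨u, fun i j hij => ?_⟩
  by_cases hi : (x i).1 = 0
  · simp [lorentzInner, hi, eq_zero hi]
  by_cases hj : (x j).1 = 0
  · simp [lorentzInner, hj, eq_zero hj]
  have inner_u : ⟪u i, u j⟫ = (x i).1⁻¹ * ((x j).1⁻¹ * ⟪(x i).2, (x j).2⟫) := by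
    simp [u, real_inner_smul_left, real_inner_smul_right, WithLp.prod_inner_apply,
      EuclideanSpace.inner_single_left, hij, mul_left_comm]
  rw [dist_eq_norm, norm_sub_sq_real, norm_u hi, norm_u hj, inner_u, lorentzInner]
  field_simp
  ring

theorem lorentzInner_mul_le_sq_add_sqrt (ha₁ : a₁ ∈ futureCone E) (ha₂ : a₂ ∈ futureCone E)
    (hb₁ : b₁ ∈ futureCone E) (hb₂ : b₂ ∈ futureCone E) :
    lorentzInner a₁ a₂ * lorentzInner b₁ b₂ ≤
      (√(lorentzInner a₁ b₁ * lorentzInner a₂ b₂) +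
        √(lorentzInner a₁ b₂ * lorentzInner a₂ b₁)) ^ 2 := by
  obtain ⟨u, hu⟩ := exists_mul_dist_sq_eq_two_mul_lorentzInner ![a₁, a₂, b₁, b₂]
    (by simp [Fin.forall_fin_succ, *])
  have h_aa : a₁.1 * a₂.1 * dist (u 0) (u 1) ^ 2 = 2 * lorentzInner a₁ a₂ := hu 0 1 (by decide)
  have h_bb : b₁.1 * b₂.1 * dist (u 2) (u 3) ^ 2 = 2 * lorentzInner b₁ b₂ := hu 2 3 (by decide)
  have h₁₁ : a₁.1 * b₁.1 * dist (u 0) (u 2) ^ 2 = 2 * lorentzInner a₁ b₁ := hu 0 2 (by decide)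
  have h₂₂ : a₂.1 * b₂.1 * dist (u 1) (u 3) ^ 2 = 2 * lorentzInner a₂ b₂ := hu 1 3 (by decide)
  have h₁₂ : a₁.1 * b₂.1 * dist (u 0) (u 3) ^ 2 = 2 * lorentzInner a₁ b₂ := hu 0 3 (by decide)
  have h₂₁ : a₂.1 * b₁.1 * dist (u 1) (u 2) ^ 2 = 2 * lorentzInner a₂ b₁ := hu 1 2 (by decide)
  obtain ⟨k, hk, k_sq⟩ : ∃ k : ℝ, 0 ≤ k ∧ 4 * k ^ 2 = a₁.1 * a₂.1 * (b₁.1 * b₂.1) := by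
    have hT : 0 ≤ a₁.1 * a₂.1 * (b₁.1 * b₂.1) :=
      mul_nonneg (mul_nonneg (fst_nonneg_of_mem_futureCone ha₁) (fst_nonneg_of_mem_futureCone ha₂))
        (mul_nonneg (fst_nonneg_of_mem_futureCone hb₁) (fst_nonneg_of_mem_futureCone hb₂))
    exact ⟨√(a₁.1 * a₂.1 * (b₁.1 * b₂.1)) / 2, by positivity, by
      rw [div_pow, Real.sq_sqrt hT]; ring⟩
  have mul_eq {p q r s d d' : ℝ} (hp : p * d ^ 2 = 2 * r) (hq : q * d' ^ 2 = 2 * s)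
      (hpq : 4 * k ^ 2 = p * q) : r * s = (k * (d * d')) ^ 2 := by
    linear_combination -(1 / 4) * d ^ 2 * d' ^ 2 * hpq - s / 2 * hp - p * d ^ 2 / 4 * hq
  have ptolemy : dist (u 0) (u 1) * dist (u 2) (u 3) ≤
      dist (u 0) (u 2) * dist (u 1) (u 3) + dist (u 0) (u 3) * dist (u 1) (u 2) := by
    simpa only [dist_comm (u 2) (u 1), mul_comm (dist (u 1) (u 2))] using
      EuclideanGeometry.mul_dist_le_mul_dist_add_mul_dist (u 0) (u 2) (u 1) (u 3)
  rw [mul_eq h_aa h_bb k_sq, mul_eq h₁₁ h₂₂ (by linarith), mul_eq h₁₂ h₂₁ (by linarith),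
    Real.sqrt_sq (by positivity), Real.sqrt_sq (by positivity), ← mul_add]
  gcongr

lemma lorentzSq_sub_mul_le_lorentzSq_add_mul (ha₂ : a₂ ∈ futureCone E) (hb₂ : b₂ ∈ futureCone E)
    (ha : a₁ - a₂ ∈ futureCone E) (hb : b₁ - b₂ ∈ futureCone E) :
    lorentzSq (a₁ - a₂) * lorentzSq (b₁ - b₂) ≤
      lorentzSq (a₁ + b₂) * lorentzSq (a₂ + b₁) := by
  have ha_le := lorentzSq_le_lorentzSq_add ha (add_mem ha₂ hb₂)
  have hb_le := lorentzSq_le_lorentzSq_add hb (add_mem hb₂ ha₂)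
  rw [← add_assoc, sub_add_cancel] at ha_le hb_le
  rw [add_comm a₂]
  exact mul_le_mul ha_le hb_le (lorentzSq_nonneg hb) ((lorentzSq_nonneg ha).trans ha_le)

lemma lorentzSq_sub_mul_le_sq_add_sqrt_of_nonneg (ha₁ : a₁ ∈ futureCone E)
    (ha₂ : a₂ ∈ futureCone E) (hb₁ : b₁ ∈ futureCone E) (hb₂ : b₂ ∈ futureCone E)
    (ha : 0 ≤ lorentzSq (a₁ - a₂)) (hb : 0 ≤ lorentzSq (b₁ - b₂)) :
    lorentzSq (a₁ - a₂) * lorentzSq (b₁ - b₂) ≤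
      (√(lorentzSq (a₁ + b₁) * lorentzSq (a₂ + b₂)) +
        √(lorentzSq (a₁ + b₂) * lorentzSq (a₂ + b₁))) ^ 2 := by
  have le_max : lorentzSq (a₁ - a₂) * lorentzSq (b₁ - b₂) ≤
      max (lorentzSq (a₁ + b₁) * lorentzSq (a₂ + b₂))
        (lorentzSq (a₁ + b₂) * lorentzSq (a₂ + b₁)) := by
    rcases mem_futureCone_or_neg_mem_of_lorentzSq_nonneg ha with ha | ha <;>
      rcases mem_futureCone_or_neg_mem_of_lorentzSq_nonneg hb with hb | hb
    · exact le_max_of_le_right (lorentzSq_sub_mul_le_lorentzSq_add_mul ha₂ hb₂ ha hb)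
    · rw [← lorentzSq_neg (b₁ - b₂)]
      rw [neg_sub] at hb ⊢
      exact le_max_of_le_left (lorentzSq_sub_mul_le_lorentzSq_add_mul ha₂ hb₁ ha hb)
    · rw [← lorentzSq_neg (a₁ - a₂)]
      rw [neg_sub] at ha ⊢
      exact le_max_of_le_left ((lorentzSq_sub_mul_le_lorentzSq_add_mul ha₁ hb₂ ha hb).trans_eq
        (mul_comm _ _))
    · rw [← lorentzSq_neg (a₁ - a₂), ← lorentzSq_neg (b₁ - b₂)]
      rw [neg_sub] at ha hb
      rw [neg_sub, neg_sub]
      exact le_max_of_le_right ((lorentzSq_sub_mul_le_lorentzSq_add_mul ha₁ hb₁ ha hb).trans_eq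
        (mul_comm _ _))
  have max_le_sq (p q : ℝ) : max p q ≤ (√p + √q) ^ 2 :=
    max_le ((Real.sqrt_le_left (by positivity)).1 (le_add_of_nonneg_right (Real.sqrt_nonneg _)))
      ((Real.sqrt_le_left (by positivity)).1 (le_add_of_nonneg_left (Real.sqrt_nonneg _)))
  exact le_max.trans (max_le_sq _ _)

theorem lorentzSq_sub_mul_le_sq_add_sqrt (ha₁ : a₁ ∈ futureCone E) (ha₂ : a₂ ∈ futureCone E)
    (hb₁ : b₁ ∈ futureCone E) (hb₂ : b₂ ∈ futureCone E) :
    lorentzSq (a₁ - a₂) * lorentzSq (b₁ - b₂) ≤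
      (√(lorentzSq (a₁ + b₁) * lorentzSq (a₂ + b₂)) +
        √(lorentzSq (a₁ + b₂) * lorentzSq (a₂ + b₁))) ^ 2 := by
  rcases le_total 0 (lorentzSq (a₁ - a₂)) with ha | ha <;>
    rcases le_total 0 (lorentzSq (b₁ - b₂)) with hb | hb
  · exact lorentzSq_sub_mul_le_sq_add_sqrt_of_nonneg ha₁ ha₂ hb₁ hb₂ ha hb
  · exact (mul_nonpos_of_nonneg_of_nonpos ha hb).trans (sq_nonneg _)
  · exact (mul_nonpos_of_nonpos_of_nonneg ha hb).trans (sq_nonneg _)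
  have sqrt_mul_le {x x' y y' : ℝ × E} (hx : x ∈ futureCone E) (hx' : x' ∈ futureCone E)
      (hy : y ∈ futureCone E) (hy' : y' ∈ futureCone E) :
      2 * √(lorentzInner x x' * lorentzInner y y') ≤
        √(lorentzSq (x + x') * lorentzSq (y + y')) := by
    refine Real.le_sqrt_of_sq_le ?_
    rw [mul_pow,
      Real.sq_sqrt (mul_nonneg (lorentzInner_nonneg hx hx') (lorentzInner_nonneg hy hy'))]
    linarith [mul_le_mul (two_mul_lorentzInner_le_lorentzSq_add hx hx')
      (two_mul_lorentzInner_le_lorentzSq_add hy hy')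
      (mul_nonneg zero_le_two (lorentzInner_nonneg hy hy')) (lorentzSq_nonneg (add_mem hx hx'))]
  calc lorentzSq (a₁ - a₂) * lorentzSq (b₁ - b₂)
      = -lorentzSq (a₁ - a₂) * -lorentzSq (b₁ - b₂) := (neg_mul_neg _ _).symm
    _ ≤ (2 * lorentzInner a₁ a₂) * (2 * lorentzInner b₁ b₂) :=
        mul_le_mul (neg_lorentzSq_sub_le_two_mul_lorentzInner ha₁ ha₂)
          (neg_lorentzSq_sub_le_two_mul_lorentzInner hb₁ hb₂) (neg_nonneg.2 hb)
          (mul_nonneg zero_le_two (lorentzInner_nonneg ha₁ ha₂))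
    _ = 4 * (lorentzInner a₁ a₂ * lorentzInner b₁ b₂) := by ring
    _ ≤ 4 * (√(lorentzInner a₁ b₁ * lorentzInner a₂ b₂) +
          √(lorentzInner a₁ b₂ * lorentzInner a₂ b₁)) ^ 2 := by
        gcongr
        exact lorentzInner_mul_le_sq_add_sqrt ha₁ ha₂ hb₁ hb₂
    _ = (2 * √(lorentzInner a₁ b₁ * lorentzInner a₂ b₂) +
          2 * √(lorentzInner a₁ b₂ * lorentzInner a₂ b₁)) ^ 2 := by ring
    _ ≤ _ := by
        gcongr
        · exact sqrt_mul_le ha₁ hb₁ ha₂ hb₂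
        · exact sqrt_mul_le ha₁ hb₂ ha₂ hb₁

end Lorentz

section Compatibility

variable {E : Type*} [NormedAddCommGroup E] {M M₁ M₂ N₁ N₂ : ℝ × E} {c s w : ℝ}

/-- The unit vector of the time axis of Minkowski space `ℝ × E`. -/
def timeUnit : ℝ × E := (1, 0)

/-- The geometric mean of the Lorentz squares of `timeUnit ± M`. For the binary observable with
effects `(timeUnit ± M) / 2` it measures how far these are from having an eigenvalue `0`. -/
def unsharpness (M : ℝ × E) : ℝ := √(lorentzSq (timeUnit + M) * lorentzSq (timeUnit - M))

lemma unsharpness_nonneg (M : ℝ × E) : 0 ≤ unsharpness M := Real.sqrt_nonneg _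

lemma continuous_unsharpness : Continuous (unsharpness : ℝ × E → ℝ) :=
  ((continuous_lorentzSq.comp (continuous_const.add continuous_id)).mul
    (continuous_lorentzSq.comp (continuous_const.sub continuous_id))).sqrt

lemma unsharpness_eq_zero (hM : ‖M.2‖ = 1 - |M.1|) : unsharpness M = 0 := by
  have : lorentzSq (timeUnit + M) * lorentzSq (timeUnit - M) = 0 := by
    simp only [timeUnit, lorentzSq, Prod.fst_add, Prod.snd_add, Prod.fst_sub, Prod.snd_sub,
      zero_add, zero_sub, norm_neg, hM]
    rcases abs_choice M.1 with h | h <;> rw [h] <;> ring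
  rw [unsharpness, this, Real.sqrt_zero]

lemma exists_sq_sub_le_and_le_sq_add {γ₁ γ₂ : ℝ → ℝ × E} (hγ₁ : Continuous γ₁)
    (hγ₂ : Continuous γ₂)
    (h_zero : lorentzSq (γ₁ 0 + γ₂ 0) * lorentzSq (γ₁ 0 - γ₂ 0) ≤
      (unsharpness (γ₁ 0) + unsharpness (γ₂ 0)) ^ 2)
    (h_one : (unsharpness (γ₁ 1) - unsharpness (γ₂ 1)) ^ 2 ≤
      lorentzSq (γ₁ 1 + γ₂ 1) * lorentzSq (γ₁ 1 - γ₂ 1)) :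
    ∃ r ∈ Set.Icc (0 : ℝ) 1,
      (unsharpness (γ₁ r) - unsharpness (γ₂ r)) ^ 2 ≤
          lorentzSq (γ₁ r + γ₂ r) * lorentzSq (γ₁ r - γ₂ r) ∧
        lorentzSq (γ₁ r + γ₂ r) * lorentzSq (γ₁ r - γ₂ r) ≤
          (unsharpness (γ₁ r) + unsharpness (γ₂ r)) ^ 2 := by
  let f (r : ℝ) : ℝ := (unsharpness (γ₁ r) - unsharpness (γ₂ r)) ^ 2 -
    lorentzSq (γ₁ r + γ₂ r) * lorentzSq (γ₁ r - γ₂ r)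
  have hf : Continuous f :=
    (((continuous_unsharpness.comp hγ₁).sub (continuous_unsharpness.comp hγ₂)).pow 2).sub
      ((continuous_lorentzSq.comp (hγ₁.add hγ₂)).mul (continuous_lorentzSq.comp (hγ₁.sub hγ₂)))
  rcases le_total (f 0) 0 with hf₀ | hf₀
  · exact ⟨0, ⟨le_rfl, zero_le_one⟩, sub_nonpos.1 hf₀, h_zero⟩
  obtain ⟨r, hr, hfr⟩ :=
    intermediate_value_Icc' zero_le_one hf.continuousOn ⟨sub_nonpos.2 h_one, hf₀⟩
  refine ⟨r, hr, (sub_eq_zero.1 hfr).le, (sub_eq_zero.1 hfr).ge.trans ?_⟩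
  linarith [mul_nonneg (unsharpness_nonneg (γ₁ r)) (unsharpness_nonneg (γ₂ r))]

section NormedSpace

variable [NormedSpace ℝ E]

/-- Vectors `M₁`, `M₂` for which some `ζ` places all `e ± M₁ ± M₂ + (±)(±) ζ`, where `e` is
`timeUnit`, in the future cone. These four vectors play the role of `4 G (±, ±)` for a joint
observable `G` of two binary observables with effects `(e ± M₁) / 2` and `(e ± M₂) / 2`. -/
def ConeCompatible (M₁ M₂ : ℝ × E) : Prop :=
  ∃ ζ, timeUnit + M₁ + M₂ + ζ ∈ futureCone E ∧ timeUnit - M₁ - M₂ + ζ ∈ futureCone E ∧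
    timeUnit + M₁ - M₂ - ζ ∈ futureCone E ∧ timeUnit - M₁ + M₂ - ζ ∈ futureCone E

variable (E) in
/-- The vectors `M` for which `(timeUnit ± M) / 2` are the effects of a binary observable, that is,
the double cone with apexes `± timeUnit`. -/
def causalDiamond : Set (ℝ × E) := {M | timeUnit + M ∈ futureCone E ∧ timeUnit - M ∈ futureCone E}

lemma mem_causalDiamond_iff : M ∈ causalDiamond E ↔ ‖M.2‖ ≤ 1 - |M.1| := by
  rw [le_sub_comm, abs_le', causalDiamond]
  simp only [Set.mem_ofPred_eq, mem_futureCone, timeUnit, Prod.fst_add, Prod.snd_add,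
    Prod.fst_sub, Prod.snd_sub, zero_add, zero_sub, norm_neg]
  constructor <;> rintro ⟨_, _⟩ <;> constructor <;> linarith

lemma neg_mem_causalDiamond (hM : M ∈ causalDiamond E) : -M ∈ causalDiamond E := by
  simpa [mem_causalDiamond_iff] using hM

lemma abs_fst_le_one_of_mem_causalDiamond (hM : M ∈ causalDiamond E) : |M.1| ≤ 1 := by
  linarith [mem_causalDiamond_iff.1 hM, norm_nonneg M.2]

lemma unsharpness_sq (hM : M ∈ causalDiamond E) :
    unsharpness M ^ 2 = lorentzSq (timeUnit + M) * lorentzSq (timeUnit - M) :=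
  Real.sq_sqrt (mul_nonneg (lorentzSq_nonneg hM.1) (lorentzSq_nonneg hM.2))

lemma neg_one_le_lorentzSq (hM : M ∈ causalDiamond E) : -1 ≤ lorentzSq M := by
  have hM' : ‖M.2‖ ≤ 1 := (mem_causalDiamond_iff.1 hM).trans (sub_le_self _ (abs_nonneg _))
  rw [lorentzSq]
  linarith [pow_le_one₀ (n := 2) (norm_nonneg _) hM', sq_nonneg M.1]

lemma ConeCompatible.symm (h : ConeCompatible M₁ M₂) : ConeCompatible M₂ M₁ := by
  obtain ⟨ζ, hpp, hmm, hpm, hmp⟩ := h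
  refine ⟨ζ, ?_, ?_, ?_, ?_⟩
  · rwa [add_right_comm timeUnit]
  · rwa [sub_right_comm timeUnit]
  · rwa [add_sub_right_comm]
  · rwa [sub_add_eq_add_sub]

lemma ConeCompatible.neg_right (h : ConeCompatible M₁ M₂) : ConeCompatible M₁ (-M₂) := by
  obtain ⟨ζ, hpp, hmm, hpm, hmp⟩ := h
  refine ⟨-ζ, ?_, ?_, ?_, ?_⟩ <;> simpa only [← sub_eq_add_neg, sub_neg_eq_add]

lemma coneCompatible_of_add_mem (h₁ : M₁ ∈ causalDiamond E) (h₂ : M₂ ∈ causalDiamond E)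
    (h : M₁ + M₂ ∈ futureCone E) : ConeCompatible M₁ M₂ := by
  refine ⟨M₁ + M₂ - timeUnit, ?_, ?_, ?_, ?_⟩
  · convert add_mem h h using 1
    abel
  · convert zero_mem (futureCone E) using 1
    abel
  · convert add_mem h₂.2 h₂.2 using 1
    abel
  · convert add_mem h₁.2 h₁.2 using 1
    abel

lemma coneCompatible_of_lorentzSq_add_nonneg (h₁ : M₁ ∈ causalDiamond E)
    (h₂ : M₂ ∈ causalDiamond E) (h : 0 ≤ lorentzSq (M₁ + M₂)) : ConeCompatible M₁ M₂ := by
  rcases mem_futureCone_or_neg_mem_of_lorentzSq_nonneg h with h | h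
  · exact coneCompatible_of_add_mem h₁ h₂ h
  · rw [neg_add] at h
    simpa only [neg_neg] using (coneCompatible_of_add_mem (neg_mem_causalDiamond h₁)
      (neg_mem_causalDiamond h₂) h).neg_right.symm.neg_right.symm

lemma coneCompatible_of_lorentzSq_sub_nonneg (h₁ : M₁ ∈ causalDiamond E)
    (h₂ : M₂ ∈ causalDiamond E) (h : 0 ≤ lorentzSq (M₁ - M₂)) : ConeCompatible M₁ M₂ := by
  rw [sub_eq_add_neg] at h
  simpa only [neg_neg] using
    (coneCompatible_of_lorentzSq_add_nonneg h₁ (neg_mem_causalDiamond h₂) h).neg_right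

lemma convex_setOf_coneCompatible (M₁ : ℝ × E) : Convex ℝ {M₂ | ConeCompatible M₁ M₂} := by
  rintro M₂ ⟨ζ, hpp, hmm, hpm, hmp⟩ M₂' ⟨ζ', hpp', hmm', hpm', hmp'⟩ a b ha hb hab
  have mix_mem {x x' : ℝ × E} (hx : x ∈ futureCone E) (hx' : x' ∈ futureCone E) :
      a • x + b • x' ∈ futureCone E :=
    (futureCone E).convex hx hx' ha hb hab
  obtain rfl := eq_sub_of_add_eq' hab
  refine ⟨a • ζ + (1 - a) • ζ', ?_, ?_, ?_, ?_⟩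
  · convert mix_mem hpp hpp' using 1
    module
  · convert mix_mem hmm hmm' using 1
    module
  · convert mix_mem hpm hpm' using 1
    module
  · convert mix_mem hmp hmp' using 1
    module

lemma coneCompatible_smul_timeUnit (hM : M ∈ causalDiamond E) (hw : |w| ≤ 1) :
    ConeCompatible M (w • timeUnit) := by
  have h_add : 0 ≤ 1 + w := by linarith [neg_abs_le w]
  have h_sub : 0 ≤ 1 - w := by linarith [le_abs_self w]
  refine ⟨w • M, ?_, ?_, ?_, ?_⟩
  · convert (futureCone E).smul_mem h_add hM.1 using 1
    module
  · convert (futureCone E).smul_mem h_sub hM.2 using 1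
    module
  · convert (futureCone E).smul_mem h_sub hM.1 using 1
    module
  · convert (futureCone E).smul_mem h_add hM.2 using 1
    module

lemma coneCompatible_of_snd_eq_zero (h₁ : M₁ ∈ causalDiamond E) (h₂ : M₂ ∈ causalDiamond E)
    (h : M₂.2 = 0) : ConeCompatible M₁ M₂ := by
  rw [show M₂ = M₂.1 • timeUnit by ext <;> simp [timeUnit, h]]
  exact coneCompatible_smul_timeUnit h₁ (abs_fst_le_one_of_mem_causalDiamond h₂)

/-- Scaling of the spatial part alone, which mixes `M` with the trivial observable of the same
bias. -/
def dilute (c : ℝ) (M : ℝ × E) : ℝ × E := (M.1, c • M.2)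

lemma continuous_dilute (M : ℝ × E) : Continuous (dilute · M) := by
  unfold dilute
  fun_prop

lemma dilute_one (M : ℝ × E) : dilute 1 M = M := by
  simp [dilute]

lemma dilute_dilute (c d : ℝ) (M : ℝ × E) : dilute c (dilute d M) = dilute (c * d) M := by
  simp [dilute, mul_smul]

lemma dilute_eq_add (c : ℝ) (M : ℝ × E) :
    dilute c M = c • M + (1 - c) • (M.1 • timeUnit) := by
  ext
  · simp [dilute, timeUnit]
    ring
  · simp [dilute, timeUnit]

lemma dilute_mem_causalDiamond (hM : M ∈ causalDiamond E) (hc : c ∈ Set.Icc 0 1) :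
    dilute c M ∈ causalDiamond E := by
  rw [mem_causalDiamond_iff] at hM ⊢
  refine le_trans ?_ hM
  rw [dilute, norm_smul, Real.norm_of_nonneg hc.1]
  exact mul_le_of_le_one_left (norm_nonneg _) hc.2

lemma ConeCompatible.dilute_right (h : ConeCompatible M₁ M₂) (h₁ : M₁ ∈ causalDiamond E)
    (h₂ : M₂ ∈ causalDiamond E) (hs : s ∈ Set.Icc 0 1) : ConeCompatible M₁ (dilute s M₂) := by
  rw [dilute_eq_add]
  exact convex_setOf_coneCompatible M₁ h
    (coneCompatible_smul_timeUnit h₁ (abs_fst_le_one_of_mem_causalDiamond h₂)) hs.1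
    (sub_nonneg.2 hs.2) (add_sub_cancel _ _)

lemma ConeCompatible.dilute_of_le {c₁ c₂ s₁ s₂ : ℝ}
    (h : ConeCompatible (dilute c₁ N₁) (dilute c₂ N₂)) (h₁ : N₁ ∈ causalDiamond E)
    (h₂ : N₂ ∈ causalDiamond E) (hc₁ : c₁ ≤ 1) (hc₂ : c₂ ≤ 1) (hs₁ : s₁ ∈ Set.Ioc 0 c₁)
    (hs₂ : s₂ ∈ Set.Ioc 0 c₂) : ConeCompatible (dilute s₁ N₁) (dilute s₂ N₂) := by
  have div_mem {s c : ℝ} (hs : s ∈ Set.Ioc 0 c) : s / c ∈ Set.Icc 0 1 :=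
    ⟨div_nonneg hs.1.le (hs.1.le.trans hs.2), div_le_one_of_le₀ hs.2 (hs.1.le.trans hs.2)⟩
  have dilute_div {s c : ℝ} (hs : s ∈ Set.Ioc 0 c) (N : ℝ × E) :
      dilute (s / c) (dilute c N) = dilute s N := by
    rw [dilute_dilute, div_mul_cancel₀ _ (hs.1.trans_le hs.2).ne']
  have h₁' := dilute_mem_causalDiamond h₁ ⟨hs₁.1.le.trans hs₁.2, hc₁⟩
  have h₂' := dilute_mem_causalDiamond h₂ ⟨hs₂.1.le.trans hs₂.2, hc₂⟩
  rw [← dilute_div hs₁, ← dilute_div hs₂]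
  exact ((h.symm.dilute_right h₂' h₁' (div_mem hs₁)).symm).dilute_right
    (dilute_mem_causalDiamond h₁' (div_mem hs₁)) h₂' (div_mem hs₂)

lemma exists_sharp_dilute_eq (hM : M ∈ causalDiamond E) (hM₀ : M.2 ≠ 0) :
    ∃ N : ℝ × E, ‖N.2‖ = 1 - |N.1| ∧ ∃ s ∈ Set.Ioc (0 : ℝ) 1, dilute s N = M := by
  rw [mem_causalDiamond_iff] at hM
  have h_norm : 0 < ‖M.2‖ := norm_pos_iff.2 hM₀
  have h_time : 0 < 1 - |M.1| := h_norm.trans_le hM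
  refine ⟨(M.1, ((1 - |M.1|) / ‖M.2‖) • M.2), ?_, ‖M.2‖ / (1 - |M.1|), ⟨by positivity, ?_⟩, ?_⟩
  · rw [norm_smul, Real.norm_of_nonneg (by positivity), div_mul_cancel₀ _ h_norm.ne']
  · exact (div_le_one h_time).2 hM
  · simp [dilute, smul_smul, h_norm.ne', h_time.ne']

end NormedSpace

variable [InnerProductSpace ℝ E]

theorem ConeCompatible.lorentzSq_add_mul_lorentzSq_sub_le (h : ConeCompatible M₁ M₂) :
    lorentzSq (M₁ + M₂) * lorentzSq (M₁ - M₂) ≤ (unsharpness M₁ + unsharpness M₂) ^ 2 := by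
  obtain ⟨ζ, hpp, hmm, hpm, hmp⟩ := h
  have h_le := lorentzSq_sub_mul_le_sq_add_sqrt hpp hmm hpm hmp
  have sqrt_mul (x y : ℝ × E) :
      √(lorentzSq ((2 : ℝ) • x) * lorentzSq ((2 : ℝ) • y)) = 4 * √(lorentzSq x * lorentzSq y) := by
    rw [lorentzSq_smul, lorentzSq_smul, ← mul_mul_mul_comm, Real.sqrt_mul (by positivity),
      Real.sqrt_mul_self (by positivity)]
    norm_num
  rw [show timeUnit + M₁ + M₂ + ζ - (timeUnit - M₁ - M₂ + ζ) = (2 : ℝ) • (M₁ + M₂) by module,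
    show timeUnit + M₁ - M₂ - ζ - (timeUnit - M₁ + M₂ - ζ) = (2 : ℝ) • (M₁ - M₂) by module,
    show timeUnit + M₁ + M₂ + ζ + (timeUnit + M₁ - M₂ - ζ) = (2 : ℝ) • (timeUnit + M₁) by module,
    show timeUnit - M₁ - M₂ + ζ + (timeUnit - M₁ + M₂ - ζ) = (2 : ℝ) • (timeUnit - M₁) by module,
    show timeUnit + M₁ + M₂ + ζ + (timeUnit - M₁ + M₂ - ζ) = (2 : ℝ) • (timeUnit + M₂) by module,
    show timeUnit - M₁ - M₂ + ζ + (timeUnit + M₁ - M₂ - ζ) = (2 : ℝ) • (timeUnit - M₂) by module,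
    sqrt_mul, sqrt_mul, lorentzSq_smul, lorentzSq_smul] at h_le
  rw [unsharpness, unsharpness]
  linarith

/-- The Gram determinant of two vectors, which is positive when they are linearly independent. -/
def gramDet (u v : E) : ℝ := ‖u‖ ^ 2 * ‖v‖ ^ 2 - ⟪u, v⟫ ^ 2

lemma gramDet_smul_smul (a b : ℝ) (u v : E) :
    gramDet (a • u) (b • v) = a ^ 2 * b ^ 2 * gramDet u v := by
  simp only [gramDet, norm_smul, mul_pow, Real.norm_eq_abs, sq_abs, real_inner_smul_left,
    real_inner_smul_right]
  ring

lemma exists_inner_eq_and_inner_eq {u v : E} (h : 0 < gramDet u v) (a b : ℝ) :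
    ∃ z, ⟪u, z⟫ = a ∧ ⟪v, z⟫ = b ∧
      gramDet u v * ‖z‖ ^ 2 = ‖v‖ ^ 2 * a ^ 2 - 2 * ⟪u, v⟫ * a * b + ‖u‖ ^ 2 * b ^ 2 := by
  obtain ⟨p, hp⟩ : ∃ p, gramDet u v * p = ‖v‖ ^ 2 * a - ⟪u, v⟫ * b :=
    ⟨_, mul_div_cancel₀ _ h.ne'⟩
  obtain ⟨q, hq⟩ : ∃ q, gramDet u v * q = ‖u‖ ^ 2 * b - ⟪u, v⟫ * a :=
    ⟨_, mul_div_cancel₀ _ h.ne'⟩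
  have hu : ⟪u, p • u + q • v⟫ = a := by
    rw [inner_add_right, real_inner_smul_right, real_inner_smul_right, real_inner_self_eq_norm_sq]
    refine mul_left_cancel₀ h.ne' ?_
    rw [gramDet] at hp hq ⊢
    linear_combination ‖u‖ ^ 2 * hp + ⟪u, v⟫ * hq
  have hv : ⟪v, p • u + q • v⟫ = b := by
    rw [inner_add_right, real_inner_smul_right, real_inner_smul_right, real_inner_self_eq_norm_sq,
      real_inner_comm]
    refine mul_left_cancel₀ h.ne' ?_
    rw [gramDet] at hp hq ⊢
    linear_combination ⟪u, v⟫ * hp + ‖v‖ ^ 2 * hq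
  refine ⟨p • u + q • v, hu, hv, ?_⟩
  rw [← real_inner_self_eq_norm_sq (p • u + q • v)]
  nth_rw 1 [inner_add_left]
  rw [real_inner_smul_left, real_inner_smul_left, hu, hv]
  linear_combination a * hp + b * hq

lemma lorentzSq_timeUnit_add_add_add (x y z : ℝ × E) :
    lorentzSq (timeUnit + x + y + z) = 1 + lorentzSq x + lorentzSq y + lorentzSq z +
      2 * (x.1 + y.1 + z.1 + lorentzInner x y + lorentzInner x z + lorentzInner y z) := by
  simp only [lorentzSq, lorentzInner, timeUnit, Prod.fst_add, Prod.snd_add, zero_add,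
    norm_add_sq_real, inner_add_left]
  ring

lemma exists_lorentzSq_eq (h₁ : M₁ ∈ causalDiamond E) (h₂ : M₂ ∈ causalDiamond E)
    (hΔ : 0 < gramDet M₁.2 M₂.2) :
    ∃ ζ : ℝ × E, ζ.1 = -lorentzInner M₁ M₂ ∧ ∃ ν : ℝ,
      16 * gramDet M₁.2 M₂.2 * ν =
        ((unsharpness M₁ + unsharpness M₂) ^ 2 - lorentzSq (M₁ + M₂) * lorentzSq (M₁ - M₂)) *
        (lorentzSq (M₁ + M₂) * lorentzSq (M₁ - M₂) - (unsharpness M₁ - unsharpness M₂) ^ 2) ∧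
      lorentzSq (timeUnit + M₁ + M₂ + ζ) = ν ∧ lorentzSq (timeUnit - M₁ - M₂ + ζ) = ν ∧
      lorentzSq (timeUnit + M₁ - M₂ - ζ) = ν ∧ lorentzSq (timeUnit - M₁ + M₂ - ζ) = ν := by
  obtain ⟨z, hz₁, hz₂, hz⟩ := exists_inner_eq_and_inner_eq hΔ
    (M₂.1 - M₁.1 * lorentzInner M₁ M₂) (M₁.1 - M₂.1 * lorentzInner M₁ M₂)
  -- This `ζ` cancels the terms of the four Lorentz squares that depend on the signs.
  let ζ : ℝ × E := (-lorentzInner M₁ M₂, z)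
  have h_inner₁ : lorentzInner M₁ ζ = -M₂.1 := by
    simp only [lorentzInner, ζ, hz₁]
    ring
  have h_inner₂ : lorentzInner M₂ ζ = -M₁.1 := by
    simp only [lorentzInner, ζ, hz₂]
    ring
  refine ⟨ζ, rfl, 1 + lorentzSq M₁ + lorentzSq M₂ + lorentzSq ζ, ?_, ?_, ?_, ?_, ?_⟩
  · calc 16 * gramDet M₁.2 M₂.2 * (1 + lorentzSq M₁ + lorentzSq M₂ + lorentzSq ζ)
        = 2 * (lorentzSq (M₁ + M₂) * lorentzSq (M₁ - M₂)) *
            (unsharpness M₁ ^ 2 + unsharpness M₂ ^ 2) -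
          (unsharpness M₁ ^ 2 - unsharpness M₂ ^ 2) ^ 2 -
          (lorentzSq (M₁ + M₂) * lorentzSq (M₁ - M₂)) ^ 2 := by
          rw [unsharpness_sq h₁, unsharpness_sq h₂]
          simp only [lorentzSq, lorentzInner, gramDet, timeUnit, Prod.fst_add, Prod.snd_add,
            Prod.fst_sub, Prod.snd_sub, zero_add, zero_sub, norm_neg, norm_add_sq_real,
            norm_sub_sq_real, ζ] at hz ⊢
          linear_combination -16 * hz
      _ = _ := by ring
  all_goals
    simp only [sub_eq_add_neg, lorentzSq_timeUnit_add_add_add, lorentzSq_neg, lorentzInner_neg_left,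
      lorentzInner_neg_right, Prod.fst_neg, h_inner₁, h_inner₂, ζ]
    ring

theorem coneCompatible_of_sq_sub_le_of_le_sq_add (h₁ : M₁ ∈ causalDiamond E)
    (h₂ : M₂ ∈ causalDiamond E) (hΔ : 0 < gramDet M₁.2 M₂.2)
    (h_ge : (unsharpness M₁ - unsharpness M₂) ^ 2 ≤ lorentzSq (M₁ + M₂) * lorentzSq (M₁ - M₂))
    (h_le : lorentzSq (M₁ + M₂) * lorentzSq (M₁ - M₂) ≤ (unsharpness M₁ + unsharpness M₂) ^ 2) :
    ConeCompatible M₁ M₂ := by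
  rcases le_or_gt 0 (lorentzSq (M₁ + M₂)) with h_add | h_add
  · exact coneCompatible_of_lorentzSq_add_nonneg h₁ h₂ h_add
  rcases le_or_gt 0 (lorentzSq (M₁ - M₂)) with h_sub | h_sub
  · exact coneCompatible_of_lorentzSq_sub_nonneg h₁ h₂ h_sub
  obtain ⟨ζ, hζ, ν, hν, hpp, hmm, hpm, hmp⟩ := exists_lorentzSq_eq h₁ h₂ hΔ
  have ν_nonneg : 0 ≤ ν := by
    refine nonneg_of_mul_nonneg_right ?_ (mul_pos (by norm_num : (0 : ℝ) < 16) hΔ)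
    exact hν ▸ mul_nonneg (sub_nonneg.2 h_le) (sub_nonneg.2 h_ge)
  have h_eq_add : timeUnit + M₁ + M₂ + ζ - (timeUnit - M₁ - M₂ + ζ) = (2 : ℝ) • (M₁ + M₂) := by
    module
  have h_eq_sub : timeUnit + M₁ - M₂ - ζ - (timeUnit - M₁ + M₂ - ζ) = (2 : ℝ) • (M₁ - M₂) := by
    module
  have ⟨hpp_mem, hmm_mem⟩ : timeUnit + M₁ + M₂ + ζ ∈ futureCone E ∧
      timeUnit - M₁ - M₂ + ζ ∈ futureCone E := by
    refine mem_futureCone_of_spacelike_sub (hpp ▸ ν_nonneg) (hmm ▸ ν_nonneg) ?_ ?_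
    · rw [h_eq_add, lorentzSq_smul]
      linarith
    · rw [lorentzSq_add] at h_add
      simp only [timeUnit, Prod.fst_add, Prod.fst_sub, hζ]
      linarith [neg_one_le_lorentzSq h₁, neg_one_le_lorentzSq h₂]
  have ⟨hpm_mem, hmp_mem⟩ : timeUnit + M₁ - M₂ - ζ ∈ futureCone E ∧
      timeUnit - M₁ + M₂ - ζ ∈ futureCone E := by
    refine mem_futureCone_of_spacelike_sub (hpm ▸ ν_nonneg) (hmp ▸ ν_nonneg) ?_ ?_
    · rw [h_eq_sub, lorentzSq_smul]
      linarith
    · rw [lorentzSq_sub] at h_sub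
      simp only [timeUnit, Prod.fst_add, Prod.fst_sub, hζ]
      linarith [neg_one_le_lorentzSq h₁, neg_one_le_lorentzSq h₂]
  exact ⟨ζ, hpp_mem, hmm_mem, hpm_mem, hmp_mem⟩

lemma inner_lt_norm_mul_norm_of_sharp (h₁ : ‖N₁.2‖ = 1 - |N₁.1|) (h₂ : ‖N₂.2‖ = 1 - |N₂.1|)
    (h : lorentzSq (N₁ - N₂) < 0) : ⟪N₁.2, N₂.2⟫ < ‖N₁.2‖ * ‖N₂.2‖ := by
  have h_norm : (‖N₁.2‖ - ‖N₂.2‖) ^ 2 < ‖N₁.2 - N₂.2‖ ^ 2 :=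
    calc (‖N₁.2‖ - ‖N₂.2‖) ^ 2 = (|N₁.1| - |N₂.1|) ^ 2 := by rw [h₁, h₂]; ring
      _ ≤ (N₁.1 - N₂.1) ^ 2 := sq_le_sq.2 (abs_abs_sub_abs_le _ _)
      _ < ‖N₁.2 - N₂.2‖ ^ 2 := sub_neg.1 h
  rw [norm_sub_sq_real] at h_norm
  linarith

lemma gramDet_pos_of_sharp (h₁ : ‖N₁.2‖ = 1 - |N₁.1|) (h₂ : ‖N₂.2‖ = 1 - |N₂.1|)
    (h_add : lorentzSq (N₁ + N₂) < 0) (h_sub : lorentzSq (N₁ - N₂) < 0) :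
    0 < gramDet N₁.2 N₂.2 := by
  have h_pos := inner_lt_norm_mul_norm_of_sharp h₁ h₂ h_sub
  have h_neg : -⟪N₁.2, N₂.2⟫ < ‖N₁.2‖ * ‖N₂.2‖ := by
    simpa using inner_lt_norm_mul_norm_of_sharp (N₂ := -N₂) h₁ (by simpa using h₂)
      (by rwa [sub_neg_eq_add])
  rw [gramDet, ← mul_pow, sq_sub_sq]
  exact mul_pos (by linarith) (by linarith)

lemma exists_coneCompatible_dilute {s₁ s₂ : ℝ} (h₁ : ‖N₁.2‖ = 1 - |N₁.1|)
    (h₂ : ‖N₂.2‖ = 1 - |N₂.1|) (h_add : lorentzSq (N₁ + N₂) < 0) (h_sub : lorentzSq (N₁ - N₂) < 0)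
    (hs₁ : s₁ ∈ Set.Ioc 0 1) (hs₂ : s₂ ∈ Set.Ioc 0 1)
    (h_le : lorentzSq (dilute s₁ N₁ + dilute s₂ N₂) * lorentzSq (dilute s₁ N₁ - dilute s₂ N₂) ≤
      (unsharpness (dilute s₁ N₁) + unsharpness (dilute s₂ N₂)) ^ 2) :
    ∃ c₁ ∈ Set.Icc s₁ 1, ∃ c₂ ∈ Set.Icc s₂ 1,
      ConeCompatible (dilute c₁ N₁) (dilute c₂ N₂) := by
  let c (s : ℝ) : ℝ →ᵃ[ℝ] ℝ := AffineMap.lineMap s 1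
  have continuous_dilute_c (s : ℝ) (N : ℝ × E) : Continuous fun r => dilute (c s r) N :=
    (continuous_dilute N).comp AffineMap.lineMap_continuous
  obtain ⟨r, hr, h_ge, h_le⟩ := exists_sq_sub_le_and_le_sq_add (continuous_dilute_c s₁ N₁)
    (continuous_dilute_c s₂ N₂) (by simpa [c] using h_le)
    (by simpa [c, dilute_one, unsharpness_eq_zero h₁, unsharpness_eq_zero h₂] using
      (mul_pos_of_neg_of_neg h_add h_sub).le)
  have c_mem {s : ℝ} (hs : s ∈ Set.Ioc 0 1) : c s r ∈ Set.Icc s 1 :=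
    (convex_Icc s 1).lineMap_mem ⟨le_rfl, hs.2⟩ ⟨hs.2, le_rfl⟩ hr
  have c_pos {s : ℝ} (hs : s ∈ Set.Ioc 0 1) : 0 < c s r := hs.1.trans_le (c_mem hs).1
  have dilute_mem {s : ℝ} (hs : s ∈ Set.Ioc 0 1) {N : ℝ × E} (hN : ‖N.2‖ = 1 - |N.1|) :
      dilute (c s r) N ∈ causalDiamond E :=
    dilute_mem_causalDiamond (mem_causalDiamond_iff.2 hN.le) ⟨(c_pos hs).le, (c_mem hs).2⟩
  refine ⟨c s₁ r, c_mem hs₁, c s₂ r, c_mem hs₂,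
    coneCompatible_of_sq_sub_le_of_le_sq_add (dilute_mem hs₁ h₁) (dilute_mem hs₂ h₂) ?_ h_ge h_le⟩
  rw [dilute, dilute, gramDet_smul_smul]
  exact mul_pos (mul_pos (pow_pos (c_pos hs₁) 2) (pow_pos (c_pos hs₂) 2))
    (gramDet_pos_of_sharp h₁ h₂ h_add h_sub)

theorem coneCompatible_iff (h₁ : M₁ ∈ causalDiamond E) (h₂ : M₂ ∈ causalDiamond E) :
    ConeCompatible M₁ M₂ ↔
      lorentzSq (M₁ + M₂) * lorentzSq (M₁ - M₂) ≤ (unsharpness M₁ + unsharpness M₂) ^ 2 := by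
  refine ⟨ConeCompatible.lorentzSq_add_mul_lorentzSq_sub_le, fun h_le => ?_⟩
  by_cases h₁₀ : M₁.2 = 0
  · exact (coneCompatible_of_snd_eq_zero h₂ h₁ h₁₀).symm
  by_cases h₂₀ : M₂.2 = 0
  · exact coneCompatible_of_snd_eq_zero h₁ h₂ h₂₀
  obtain ⟨N₁, hN₁, s₁, hs₁, rfl⟩ := exists_sharp_dilute_eq h₁ h₁₀
  obtain ⟨N₂, hN₂, s₂, hs₂, rfl⟩ := exists_sharp_dilute_eq h₂ h₂₀
  have hN₁' := mem_causalDiamond_iff.2 hN₁.le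
  have hN₂' := mem_causalDiamond_iff.2 hN₂.le
  suffices ∃ c₁ ∈ Set.Icc s₁ 1, ∃ c₂ ∈ Set.Icc s₂ 1,
      ConeCompatible (dilute c₁ N₁) (dilute c₂ N₂) by
    obtain ⟨c₁, hc₁, c₂, hc₂, h⟩ := this
    exact h.dilute_of_le hN₁' hN₂' hc₁.2 hc₂.2 ⟨hs₁.1, hc₁.1⟩ ⟨hs₂.1, hc₂.1⟩
  by_cases h_spacelike : lorentzSq (N₁ + N₂) < 0 ∧ lorentzSq (N₁ - N₂) < 0
  · exact exists_coneCompatible_dilute hN₁ hN₂ h_spacelike.1 h_spacelike.2 hs₁ hs₂ h_le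
  · refine ⟨1, ⟨hs₁.2, le_rfl⟩, 1, ⟨hs₂.2, le_rfl⟩, ?_⟩
    rw [dilute_one, dilute_one]
    rcases not_and_or.1 h_spacelike with h | h
    · exact coneCompatible_of_lorentzSq_add_nonneg hN₁' hN₂' (not_lt.1 h)
    · exact coneCompatible_of_lorentzSq_sub_nonneg hN₁' hN₂' (not_lt.1 h)

end Compatibility

section Qubit

variable {w : ℝ} {m : EuclideanSpace ℝ (Fin 3)}

/-- The Hermitian matrix `t I + v·σ` with Bloch coordinates `(t, v)`; its determinant is
`lorentzSq (t, v)`. -/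
def blochMatrix : ℝ × EuclideanSpace ℝ (Fin 3) →ₗ[ℝ] Mat2 where
  toFun x := (x.1 : ℂ) • 1 + pauliDot x.2
  map_add' x y := by
    simp only [pauliDot, Prod.fst_add, Prod.snd_add, PiLp.add_apply, Complex.ofReal_add]
    module
  map_smul' c x := by
    simp only [pauliDot, Prod.smul_fst, Prod.smul_snd, PiLp.smul_apply, smul_eq_mul,
      Complex.ofReal_mul, RingHom.id_apply, ← Complex.coe_smul]
    module

lemma blochMatrix_apply (x : ℝ × EuclideanSpace ℝ (Fin 3)) :
    blochMatrix x = (x.1 : ℂ) • 1 + pauliDot x.2 := rfl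

lemma blochMatrix_timeUnit : blochMatrix timeUnit = 1 := by
  simp [blochMatrix_apply, timeUnit, pauliDot]

lemma pauliDot_eq (v : EuclideanSpace ℝ (Fin 3)) :
    pauliDot v = !![(v 2 : ℂ), v 0 - v 1 * Complex.I; v 0 + v 1 * Complex.I, -v 2] := by
  ext i j
  fin_cases i <;> fin_cases j <;> simp [pauliDot, sigma1, sigma2, sigma3, sub_eq_add_neg]

lemma blochMatrix_eq (x : ℝ × EuclideanSpace ℝ (Fin 3)) :
    blochMatrix x = !![(x.1 + x.2 2 : ℂ), x.2 0 - x.2 1 * Complex.I;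
      x.2 0 + x.2 1 * Complex.I, x.1 - x.2 2] := by
  simp [blochMatrix_apply, pauliDot_eq, one_fin_two, sub_eq_add_neg]

lemma norm_sq_eq_add (v : EuclideanSpace ℝ (Fin 3)) :
    ‖v‖ ^ 2 = v 0 ^ 2 + v 1 ^ 2 + v 2 ^ 2 := by
  simp [EuclideanSpace.norm_sq_eq, Fin.sum_univ_three]

lemma trace_blochMatrix (x : ℝ × EuclideanSpace ℝ (Fin 3)) :
    (blochMatrix x).trace = ((2 * x.1 : ℝ) : ℂ) := by
  rw [blochMatrix_eq, trace_fin_two_of]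
  push_cast
  ring

lemma det_blochMatrix (x : ℝ × EuclideanSpace ℝ (Fin 3)) :
    (blochMatrix x).det = (lorentzSq x : ℂ) := by
  rw [blochMatrix_eq, det_fin_two_of, lorentzSq, norm_sq_eq_add]
  push_cast
  linear_combination (x.2 1 : ℂ) ^ 2 * Complex.I_sq

lemma isHermitian_blochMatrix (x : ℝ × EuclideanSpace ℝ (Fin 3)) :
    (blochMatrix x).IsHermitian := by
  rw [blochMatrix_eq]
  ext i j
  fin_cases i <;> fin_cases j <;> simp [sub_eq_add_neg]

lemma exists_blochMatrix_eq {A : Mat2} (hA : A.IsHermitian) : ∃ x, blochMatrix x = A := by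
  have hA₀₀ := Complex.conj_eq_iff_im.1 (hA.apply 0 0)
  have hA₁₁ := Complex.conj_eq_iff_im.1 (hA.apply 1 1)
  have hA₁₀ : A 1 0 = star (A 0 1) := (hA.apply 1 0).symm
  refine ⟨(((A 0 0).re + (A 1 1).re) / 2,
    !₂[(A 0 1).re, -(A 0 1).im, ((A 0 0).re - (A 1 1).re) / 2]), ?_⟩
  rw [blochMatrix_eq]
  ext i j
  fin_cases i <;> fin_cases j <;> simp [Complex.ext_iff, hA₀₀, hA₁₁, hA₁₀] <;> ring

lemma blochMatrix_mul_self_of_lorentzSq_eq_zero {x : ℝ × EuclideanSpace ℝ (Fin 3)}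
    (hx : lorentzSq x = 0) : blochMatrix x * blochMatrix x = (2 * x.1) • blochMatrix x := by
  have cayley_hamilton := aeval_self_charpoly (blochMatrix x)
  simp only [charpoly_fin_two, det_blochMatrix, trace_blochMatrix, hx, Complex.ofReal_zero,
    map_zero, add_zero, map_sub, map_mul, map_pow, Polynomial.aeval_X, Polynomial.aeval_C,
    ← Algebra.smul_def, Complex.coe_smul] at cayley_hamilton
  rw [← sq]
  exact sub_eq_zero.1 cayley_hamilton

lemma posSemidef_blochMatrix_norm (v : EuclideanSpace ℝ (Fin 3)) :
    (blochMatrix (‖v‖, v)).PosSemidef := by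
  rcases eq_or_ne v 0 with rfl | hv
  · simp [← Prod.zero_eq_mk, PosSemidef.zero]
  set H := blochMatrix (‖v‖, v)
  have h_sq : H * H = (2 * ‖v‖) • H := blochMatrix_mul_self_of_lorentzSq_eq_zero (sub_self _)
  have h_eq : H = (2 * ‖v‖)⁻¹ • (Hᴴ * H) := by
    rw [(isHermitian_blochMatrix _).eq, h_sq, inv_smul_smul₀ (by simpa using hv)]
  rw [h_eq]
  exact (posSemidef_conjTranspose_mul_self H).smul (by positivity)

lemma posSemidef_blochMatrix_iff {x : ℝ × EuclideanSpace ℝ (Fin 3)} :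
    (blochMatrix x).PosSemidef ↔ x ∈ futureCone (EuclideanSpace ℝ (Fin 3)) := by
  rw [mem_futureCone]
  constructor
  · intro h
    have h_trace : 0 ≤ 2 * x.1 := by
      simpa only [trace_blochMatrix, Complex.zero_le_real] using h.trace_nonneg
    have h_det : 0 ≤ lorentzSq x := by
      simpa only [det_blochMatrix, Complex.zero_le_real] using h.det_nonneg
    exact (sq_le_sq₀ (norm_nonneg _) (by linarith)).1 (sub_nonneg.1 h_det)
  · intro h
    have h_eq : x = (‖x.2‖, x.2) + (x.1 - ‖x.2‖) • timeUnit := by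
      ext <;> simp [timeUnit]
    rw [h_eq, map_add, map_smul, blochMatrix_timeUnit]
    exact (posSemidef_blochMatrix_norm x.2).add (PosSemidef.one.smul (sub_nonneg.2 h))

lemma biasedEffect_eq (w : ℝ) (m : EuclideanSpace ℝ (Fin 3)) :
    biasedEffect w m = blochMatrix ((1 / 2 : ℝ) • (timeUnit + (w, m))) := by
  rw [map_smul, map_add, blochMatrix_timeUnit, blochMatrix_apply, biasedEffect,
    ← Complex.coe_smul]
  push_cast
  module

lemma one_sub_biasedEffect_eq (w : ℝ) (m : EuclideanSpace ℝ (Fin 3)) :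
    1 - biasedEffect w m = blochMatrix ((1 / 2 : ℝ) • (timeUnit - (w, m))) := by
  rw [biasedEffect_eq, ← blochMatrix_timeUnit, ← map_sub]
  congr 1
  module

lemma mem_causalDiamond_of_posSemidef (h : (biasedEffect w m).PosSemidef)
    (h' : (1 - biasedEffect w m).PosSemidef) :
    (w, m) ∈ causalDiamond (EuclideanSpace ℝ (Fin 3)) := by
  rw [biasedEffect_eq, posSemidef_blochMatrix_iff] at h
  rw [one_sub_biasedEffect_eq, posSemidef_blochMatrix_iff] at h'
  constructor
  · simpa [smul_smul] using (futureCone _).smul_mem (zero_le_two (α := ℝ)) h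
  · simpa [smul_smul] using (futureCone _).smul_mem (zero_le_two (α := ℝ)) h'

lemma coneCompatible_of_joint {w₁ w₂ : ℝ} {m₁ m₂ : EuclideanSpace ℝ (Fin 3)}
    {G : Bool × Bool → Mat2} (hG : ∀ i, (G i).PosSemidef)
    (hG₁ : ∀ x, G (x, true) + G (x, false) = biasedObs w₁ m₁ x)
    (hG₂ : ∀ y, G (true, y) + G (false, y) = biasedObs w₂ m₂ y) :
    ConeCompatible (w₁, m₁) (w₂, m₂) := by
  obtain ⟨x, hx⟩ := exists_blochMatrix_eq (hG (true, true)).isHermitian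
  have h_tf : blochMatrix ((1 / 2 : ℝ) • (timeUnit + (w₁, m₁)) - x) = G (true, false) := by
    rw [map_sub, ← biasedEffect_eq, hx]
    exact sub_eq_of_eq_add' (hG₁ true).symm
  have h_ft : blochMatrix ((1 / 2 : ℝ) • (timeUnit + (w₂, m₂)) - x) = G (false, true) := by
    rw [map_sub, ← biasedEffect_eq, hx]
    exact sub_eq_of_eq_add' (hG₂ true).symm
  have h_ff : blochMatrix ((1 / 2 : ℝ) • (timeUnit - (w₂, m₂)) -
      ((1 / 2 : ℝ) • (timeUnit + (w₁, m₁)) - x)) = G (false, false) := by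
    rw [map_sub, ← one_sub_biasedEffect_eq, h_tf]
    exact sub_eq_of_eq_add' (hG₂ false).symm
  have four_smul_mem {y : ℝ × EuclideanSpace ℝ (Fin 3)} {i : Bool × Bool}
      (hy : blochMatrix y = G i) : (4 : ℝ) • y ∈ futureCone _ :=
    (futureCone _).smul_mem zero_le_four (posSemidef_blochMatrix_iff.1 (hy ▸ hG i))
  refine ⟨(4 : ℝ) • x - timeUnit - (w₁, m₁) - (w₂, m₂), ?_, ?_, ?_, ?_⟩
  · convert four_smul_mem hx using 1
    abel
  · convert four_smul_mem h_ff using 1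
    module
  · convert four_smul_mem h_tf using 1
    module
  · convert four_smul_mem h_ft using 1
    module

lemma exists_joint_of_coneCompatible {w₁ w₂ : ℝ} {m₁ m₂ : EuclideanSpace ℝ (Fin 3)}
    (h : ConeCompatible (w₁, m₁) (w₂, m₂)) :
    ∃ G : Bool × Bool → Mat2, IsPOVM G ∧
      (∀ x, G (x, true) + G (x, false) = biasedObs w₁ m₁ x) ∧
      (∀ y, G (true, y) + G (false, y) = biasedObs w₂ m₂ y) := by
  obtain ⟨ζ, hpp, hmm, hpm, hmp⟩ := h
  let X : Bool × Bool → ℝ × EuclideanSpace ℝ (Fin 3)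
    | (true, true) => timeUnit + (w₁, m₁) + (w₂, m₂) + ζ
    | (false, false) => timeUnit - (w₁, m₁) - (w₂, m₂) + ζ
    | (true, false) => timeUnit + (w₁, m₁) - (w₂, m₂) - ζ
    | (false, true) => timeUnit - (w₁, m₁) + (w₂, m₂) - ζ
  refine ⟨fun i => blochMatrix ((1 / 4 : ℝ) • X i), ⟨fun i => ?_, ?_⟩, fun x => ?_, fun y => ?_⟩
  · have hX : X i ∈ futureCone _ := by
      rcases i with ⟨_ | _, _ | _⟩ <;> assumption
    exact posSemidef_blochMatrix_iff.2 ((futureCone _).smul_mem (by norm_num) hX)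
  · rw [← map_sum, ← blochMatrix_timeUnit]
    simp only [Fintype.sum_prod_type, Fintype.sum_bool, X]
    congr 1
    module
  · rw [← map_add]
    cases x
    · rw [biasedObs, if_neg Bool.false_ne_true, one_sub_biasedEffect_eq]
      congr 1
      module
    · rw [biasedObs, if_pos rfl, biasedEffect_eq]
      congr 1
      module
  · rw [← map_add]
    cases y
    · rw [biasedObs, if_neg Bool.false_ne_true, one_sub_biasedEffect_eq]
      congr 1
      module
    · rw [biasedObs, if_pos rfl, biasedEffect_eq]
      congr 1
      module

lemma Fquant_eq (w : ℝ) (m : EuclideanSpace ℝ (Fin 3)) :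
    Fquant w m = (√(lorentzSq (timeUnit + (w, m))) + √(lorentzSq (timeUnit - (w, m)))) / 2 := by
  simp [Fquant, lorentzSq, timeUnit]

lemma Fquant_sq (h : (w, m) ∈ causalDiamond (EuclideanSpace ℝ (Fin 3))) :
    Fquant w m ^ 2 = (1 + lorentzSq (w, m) + unsharpness (w, m)) / 2 := by
  rw [Fquant_eq, unsharpness, Real.sqrt_mul (lorentzSq_nonneg h.1), div_pow, add_sq,
    Real.sq_sqrt (lorentzSq_nonneg h.1), Real.sq_sqrt (lorentzSq_nonneg h.2)]
  simp only [lorentzSq, timeUnit, Prod.mk_add_mk, Prod.mk_sub_mk, zero_add, zero_sub, norm_neg]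
  ring

lemma sq_div_Fquant_sq (h : (w, m) ∈ causalDiamond (EuclideanSpace ℝ (Fin 3)))
    (hF : 0 < Fquant w m) :
    w ^ 2 / Fquant w m ^ 2 = (1 + lorentzSq (w, m) - unsharpness (w, m)) / 2 := by
  rw [div_eq_iff (by positivity), Fquant_sq h]
  have h_sq := unsharpness_sq h
  simp only [lorentzSq, timeUnit, Prod.mk_add_mk, Prod.mk_sub_mk, zero_add, zero_sub,
    norm_neg] at h_sq ⊢
  linear_combination (1 / 4) * h_sq

lemma one_sub_Fquant_sq_mul_le_iff {w₁ w₂ : ℝ} {m₁ m₂ : EuclideanSpace ℝ (Fin 3)}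
    (h₁ : (w₁, m₁) ∈ causalDiamond (EuclideanSpace ℝ (Fin 3)))
    (h₂ : (w₂, m₂) ∈ causalDiamond (EuclideanSpace ℝ (Fin 3)))
    (hF₁ : 0 < Fquant w₁ m₁) (hF₂ : 0 < Fquant w₂ m₂) :
    (1 - Fquant w₁ m₁ ^ 2 - Fquant w₂ m₂ ^ 2) *
        (1 - w₁ ^ 2 / Fquant w₁ m₁ ^ 2 - w₂ ^ 2 / Fquant w₂ m₂ ^ 2) ≤
      (⟪m₁, m₂⟫ - w₁ * w₂) ^ 2 ↔
    lorentzSq ((w₁, m₁) + (w₂, m₂)) * lorentzSq ((w₁, m₁) - (w₂, m₂)) ≤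
      (unsharpness (w₁, m₁) + unsharpness (w₂, m₂)) ^ 2 := by
  have h_inner : ⟪m₁, m₂⟫ - w₁ * w₂ = -lorentzInner (w₁, m₁) (w₂, m₂) := (neg_sub _ _).symm
  rw [sq_div_Fquant_sq h₁ hF₁, sq_div_Fquant_sq h₂ hF₂, Fquant_sq h₁, Fquant_sq h₂, h_inner,
    lorentzSq_add, lorentzSq_sub]
  constructor <;> intro h <;> linarith

end Qubit

/-- Busch–Schmidt / Stano–Reitzner–Heinosaari / Yu–Liu–Li–Oh criterion: two binary
qubit observables with effects `E_j = (1/2)((1+w_j)I + m_j·σ)` are compatible iff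
`(1 − F₁² − F₂²)(1 − w₁²/F₁² − w₂²/F₂²) ≤ (m₁·m₂ − w₁w₂)²`. -/
theorem binary_qubit_compat_criterion
    (w₁ w₂ : ℝ) (m₁ m₂ : EuclideanSpace ℝ (Fin 3))
    (hE₁ : (biasedEffect w₁ m₁).PosSemidef)
    (hE₁' : ((1 : Mat2) - biasedEffect w₁ m₁).PosSemidef)
    (hE₂ : (biasedEffect w₂ m₂).PosSemidef)
    (hE₂' : ((1 : Mat2) - biasedEffect w₂ m₂).PosSemidef)
    (hF₁ : 0 < Fquant w₁ m₁) (hF₂ : 0 < Fquant w₂ m₂) :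
    (∃ G : Bool × Bool → Mat2, IsPOVM G ∧
      (∀ x, G (x, true) + G (x, false) = biasedObs w₁ m₁ x) ∧
      (∀ y, G (true, y) + G (false, y) = biasedObs w₂ m₂ y)) ↔
    (1 - Fquant w₁ m₁ ^ 2 - Fquant w₂ m₂ ^ 2) *
      (1 - w₁ ^ 2 / Fquant w₁ m₁ ^ 2 - w₂ ^ 2 / Fquant w₂ m₂ ^ 2) ≤
    (⟪m₁, m₂⟫ - w₁ * w₂) ^ 2 := by
  have h₁ := mem_causalDiamond_of_posSemidef hE₁ hE₁'
  have h₂ := mem_causalDiamond_of_posSemidef hE₂ hE₂'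
  rw [one_sub_Fquant_sq_mul_le_iff h₁ h₂ hF₁ hF₂, ← coneCompatible_iff h₁ h₂]
  exact ⟨fun ⟨_, ⟨hG, _⟩, hG₁, hG₂⟩ => coneCompatible_of_joint hG hG₁ hG₂,
    exists_joint_of_coneCompatible⟩
end
end
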